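/- arXiv:2206.10723 — 6 statements merged into one kernel-verified Lean document; each statement's English description precedes it below -/
import Mathlib

section
/- Let h₁ and h₂ be regularly varying functions on (0,∞) with indices α₁ and α₂ respectively, where α₁ > α₂ ≥ 0. Then for every c ∈ ℝ there exists m₀ > −c such that for every m ≥ m₀, one has sup_{x ≥ mR} h₁(x + cR)/h₂(x) ∼ h₁((m+c)R)/h₂(mR) as R → ∞. -/
open Filter

/-- A function `L` is slowly varying (at infinity) if it is continuous and strictly positive
on `(0,∞)` and `L(ax)/L(x) → 1` as `x → ∞` for every `a > 0`. -/
def SlowlyVarying (L : ℝ → ℝ) : Prop :=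
  ContinuousOn L (Set.Ioi 0) ∧ (∀ x : ℝ, 0 < x → 0 < L x) ∧
    ∀ a : ℝ, 0 < a → Tendsto (fun x => L (a * x) / L x) atTop (nhds 1)

/-- A continuous function `h` on `(0,∞)` is regularly varying (at infinity) with index `α`
if `h(x) ∼ x^(-α) L(x)` as `x → ∞` for some slowly varying `L`. -/
def RegularlyVarying (h : ℝ → ℝ) (α : ℝ) : Prop :=
  ContinuousOn h (Set.Ioi 0) ∧
    ∃ L : ℝ → ℝ, SlowlyVarying L ∧
      Tendsto (fun x => h x / (x ^ (-α) * L x)) atTop (nhds 1)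

lemma potter_add (l : ℝ → ℝ) (hc : Continuous l)
    (hl : ∀ u : ℝ, Tendsto (fun x => l (x + u) - l x) atTop (nhds 0))
    (ε δ : ℝ) (hε : 0 < ε) (hδ : 0 < δ) :
    ∃ X : ℝ, ∀ x, X ≤ x → ∀ u, 0 ≤ u → |l (x + u) - l x| ≤ ε + δ * u := by
  have hev : ∀ u : ℝ, ∀ e : ℝ, 0 < e → ∃ X : ℝ, ∀ x, X ≤ x → |l (x + u) - l x| ≤ e := by
    intro u e he
    have h := (Metric.tendsto_nhds.1 (hl u)) e he
    obtain ⟨X, hX⟩ := eventually_atTop.1 h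
    refine ⟨X, fun x hx => ?_⟩
    have := hX x hx
    rw [Real.dist_eq, sub_zero] at this
    exact this.le
  let A : ℕ → Set ℝ := fun n => ⋂ x : ℝ, ⋂ _ : (n : ℝ) ≤ x, {u | |l (x + u) - l x| ≤ ε / 2}
  have hA : ∀ n, IsClosed (A n) := by
    intro n
    refine isClosed_iInter fun x => isClosed_iInter fun _ => ?_
    exact isClosed_le (by fun_prop) continuous_const
  have hU : (⋃ n, A n) = Set.univ := by
    refine Set.eq_univ_of_forall fun u => ?_
    obtain ⟨X, hX⟩ := hev u (ε / 2) (by positivity)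
    obtain ⟨n, hn⟩ := exists_nat_ge X
    refine Set.mem_iUnion.2 ⟨n, ?_⟩
    simp only [A, Set.mem_iInter, Set.mem_ofPred_eq]
    exact fun x hx => hX x (hn.trans hx)
  obtain ⟨n, a, ha⟩ := nonempty_interior_of_iUnion_of_closed hA hU
  obtain ⟨η, hη, hball⟩ := Metric.isOpen_iff.1 isOpen_interior a ha
  have hmem : ∀ v, 0 ≤ v → v < η → ∀ x, (n : ℝ) ≤ x → |l (x + (a + v)) - l x| ≤ ε / 2 := by
    intro v h0 h1 x hx
    have h2 : a + v ∈ A n := by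
      apply interior_subset
      apply hball
      rw [Metric.mem_ball, Real.dist_eq, add_sub_cancel_left, abs_of_nonneg h0]
      exact h1
    simp only [A, Set.mem_iInter, Set.mem_ofPred_eq] at h2
    exact h2 x hx
  have hsmall : ∀ v, 0 ≤ v → v < η → ∀ x, (n : ℝ) + a ≤ x → |l (x + v) - l x| ≤ ε := by
    intro v h0 h1 x hx
    have e1 := hmem v h0 h1 (x - a) (by linarith)
    have e2 := hmem 0 le_rfl hη (x - a) (by linarith)
    rw [show x - a + (a + v) = x + v by ring] at e1
    rw [show x - a + (a + 0) = x by ring] at e2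
    rw [abs_le] at *
    constructor <;> linarith [e1.1, e1.2, e2.1, e2.2]
  obtain ⟨X, hX⟩ := hev η (δ * η) (by positivity)
  have hk : ∀ k : ℕ, ∀ x, X ≤ x → |l (x + k * η) - l x| ≤ δ * (k * η) := by
    intro k
    induction k with
    | zero => intro x _; simp
    | succ k ih =>
      intro x hx
      have e1 := ih x hx
      have e2 := hX (x + k * η) (by have : 0 ≤ (k : ℝ) * η := by positivity
                                    linarith)
      rw [show x + ((k + 1 : ℕ) : ℝ) * η = x + k * η + η by push_cast; ring]
      push_cast
      rw [abs_le] at *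
      constructor <;> linarith [e1.1, e1.2, e2.1, e2.2]
  refine ⟨max X (n + a), fun x hx u hu => ?_⟩
  have hx1 := (le_max_left _ _).trans hx
  have hx2 := (le_max_right _ _).trans hx
  set k := ⌊u / η⌋₊ with hkd
  have k1 : (k : ℝ) * η ≤ u := by
    rw [← le_div_iff₀ hη]; exact Nat.floor_le (by positivity)
  have k2 : u < (k + 1) * η := by
    rw [← div_lt_iff₀ hη]; exact Nat.lt_floor_add_one _
  have hkn : 0 ≤ (k : ℝ) * η := by positivity
  have e1 := hk k x hx1
  have e2 := hsmall (u - k * η) (by linarith) (by linarith) (x + k * η) (by linarith)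
  rw [show x + k * η + (u - k * η) = x + u by ring] at e2
  have e3 : δ * (k * η) ≤ δ * u := by gcongr
  rw [abs_le] at *
  constructor <;> linarith [e1.1, e1.2, e2.1, e2.2]

lemma potter_L (L : ℝ → ℝ) (hL : SlowlyVarying L) (ε δ : ℝ) (hε : 0 < ε) (hδ : 0 < δ) :
    ∃ X : ℝ, 0 < X ∧ ∀ x, X ≤ x → ∀ y, x ≤ y →
      |Real.log (L y) - Real.log (L x)| ≤ ε + δ * (Real.log y - Real.log x) := by
  obtain ⟨hc, hp, ha⟩ := hL
  obtain ⟨X, hX⟩ := potter_add (fun x => Real.log (L (Real.exp x))) (by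
      refine Continuous.log ?_ fun x => (hp _ (Real.exp_pos x)).ne'
      exact hc.comp_continuous Real.continuous_exp fun x => Real.exp_pos x) (by
      intro u
      have h := (ha (Real.exp u) (Real.exp_pos u)).comp Real.tendsto_exp_atTop
      have h2 := h.log one_ne_zero
      rw [Real.log_one] at h2
      refine h2.congr fun x => ?_
      simp only [Function.comp]
      rw [← Real.exp_add, Real.log_div (hp _ (Real.exp_pos _)).ne' (hp _ (Real.exp_pos _)).ne',
        add_comm u x]) ε δ hε hδ
  refine ⟨Real.exp X, Real.exp_pos X, fun x hx y hy => ?_⟩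
  have hx0 : 0 < x := (Real.exp_pos X).trans_le hx
  have hy0 : 0 < y := hx0.trans_le hy
  have := hX (Real.log x) ((Real.le_log_iff_exp_le hx0).2 hx) (Real.log y - Real.log x)
    (sub_nonneg.2 (Real.log_le_log hx0 hy))
  simp only [add_sub_cancel, Real.exp_log hx0, Real.exp_log hy0] at this
  exact this

lemma potter_h (h : ℝ → ℝ) (α : ℝ) (hh : RegularlyVarying h α) (ε δ : ℝ)
    (hε : 0 < ε) (hδ : 0 < δ) :
    ∃ X : ℝ, 0 < X ∧ ∀ x, X ≤ x → 0 < h x ∧ ∀ y, x ≤ y →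
      |Real.log (h y) - Real.log (h x) + α * (Real.log y - Real.log x)| ≤
        ε + δ * (Real.log y - Real.log x) := by
  obtain ⟨-, L, hL, ht⟩ := hh
  obtain ⟨X, hX0, hX⟩ := potter_L L hL (ε / 2) δ (by positivity) hδ
  have hlog := ht.log one_ne_zero
  rw [Real.log_one] at hlog
  have e1 := (Metric.tendsto_nhds.1 hlog) (ε / 4) (by positivity)
  have e2 := ht.eventually (lt_mem_nhds (zero_lt_one))
  obtain ⟨Y, hY⟩ := eventually_atTop.1 (e1.and e2)
  have key : ∀ x, max X Y ≤ x → 0 < h x ∧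
      |Real.log (h x) + α * Real.log x - Real.log (L x)| ≤ ε / 4 := by
    intro x hx
    have hx0 : 0 < x := hX0.trans_le ((le_max_left _ _).trans hx)
    obtain ⟨f1, f2⟩ := hY x ((le_max_right _ _).trans hx)
    have hLx := hL.2.1 x hx0
    have hpw : 0 < x ^ (-α) := Real.rpow_pos_of_pos hx0 _
    have hhx : 0 < h x := (div_pos_iff_of_pos_right (by positivity)).1 f2
    refine ⟨hhx, ?_⟩
    rw [Real.dist_eq, sub_zero, Real.log_div hhx.ne' (by positivity),
      Real.log_mul hpw.ne' hLx.ne', Real.log_rpow hx0] at f1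
    rw [show Real.log (h x) + α * Real.log x - Real.log (L x) =
      Real.log (h x) - (-α * Real.log x + Real.log (L x)) by ring]
    exact f1.le
  refine ⟨max X Y, lt_max_of_lt_left hX0, fun x hx => ⟨(key x hx).1, fun y hy => ?_⟩⟩
  have g1 := (key x hx).2
  have g2 := (key y (hx.trans hy)).2
  have g3 := hX x ((le_max_left _ _).trans hx) y hy
  rw [abs_le] at *
  constructor <;> linarith [g1.1, g1.2, g2.1, g2.2, g3.1, g3.2]

lemma log_ineq (A B c m R x : ℝ) (hB : 0 < B) (hAB : B ≤ A) (hm : 0 < m) (hmc : 0 < m + c)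
    (hR : 0 < R) (hx : m * R ≤ x) (hcm : B * c ≤ (A - B) * m) :
    B * (Real.log x - Real.log (m * R)) ≤
      A * (Real.log (x + c * R) - Real.log ((m + c) * R)) := by
  have hA : 0 < A := hB.trans_le hAB
  have hmR : 0 < m * R := by positivity
  have hx0 : 0 < x := hmR.trans_le hx
  have hmcR : 0 < (m + c) * R := by positivity
  have hxc : 0 < x + c * R := by linarith
  rw [← Real.log_div hx0.ne' hmR.ne', ← Real.log_div hxc.ne' hmcR.ne']
  have hb := rpow_one_add_le_one_add_mul_self (s := x / (m * R) - 1) (p := B / A)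
    (by have : 0 ≤ x / (m * R) := by positivity
        linarith) (by positivity) ((div_le_one hA).2 hAB)
  rw [add_sub_cancel] at hb
  have h2 : 1 + B / A * (x / (m * R) - 1) ≤ (x + c * R) / ((m + c) * R) := by
    have e : (x + c * R) / ((m + c) * R) - (1 + B / A * (x / (m * R) - 1)) =
        (x - m * R) * ((A - B) * m - B * c) / (A * m * ((m + c) * R)) := by
      field_simp
      ring
    have : 0 ≤ (x - m * R) * ((A - B) * m - B * c) / (A * m * ((m + c) * R)) :=
      div_nonneg (mul_nonneg (by linarith) (by linarith)) (by positivity)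
    linarith
  have h3 := Real.log_le_log (by positivity) (hb.trans h2)
  rw [Real.log_rpow (by positivity)] at h3
  have h4 := mul_le_mul_of_nonneg_left h3 hA.le
  rwa [← mul_assoc, mul_div_cancel₀ _ hA.ne'] at h4

/-- if `h₁, h₂` are regularly varying with indices `α₁ > α₂ ≥ 0`, then for every
`c ∈ ℝ` there exists `m₀ > -c` such that for every `m ≥ m₀`,
`sup_{x ≥ mR} h₁(x + cR)/h₂(x) ∼ h₁((m+c)R)/h₂(mR)` as `R → ∞`. -/
theorem statement0 (h₁ h₂ : ℝ → ℝ) (α₁ α₂ : ℝ)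
    (hrv₁ : RegularlyVarying h₁ α₁) (hrv₂ : RegularlyVarying h₂ α₂)
    (hlt : α₂ < α₁) (hnn : 0 ≤ α₂) (c : ℝ) :
    ∃ m₀ : ℝ, -c < m₀ ∧ ∀ m : ℝ, m₀ ≤ m →
      Tendsto (fun R =>
          sSup ((fun x => h₁ (x + c * R) / h₂ x) '' Set.Ici (m * R)) /
            (h₁ ((m + c) * R) / h₂ (m * R)))
        atTop (nhds 1) := by
  obtain ⟨δ, hδ, hδe⟩ : ∃ δ : ℝ, 0 < δ ∧ α₁ = α₂ + 4 * δ :=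
    ⟨(α₁ - α₂) / 4, by linarith, by ring⟩
  have hq : 0 ≤ (α₂ + δ) * |c| / (2 * δ) := by positivity
  refine ⟨(α₂ + δ) * |c| / (2 * δ) + |c| + 1, by linarith [neg_abs_le c], fun m hm => ?_⟩
  have hm0 : 0 < m := by linarith [abs_nonneg c]
  have hmc : 0 < m + c := by linarith [neg_abs_le c]
  have hcm : (α₂ + δ) * c ≤ ((α₁ - δ) - (α₂ + δ)) * m := by
    have h1 : (α₂ + δ) * |c| / (2 * δ) ≤ m := by linarith [abs_nonneg c]
    rw [div_le_iff₀ (by positivity)] at h1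
    have h2 : (α₂ + δ) * c ≤ (α₂ + δ) * |c| :=
      mul_le_mul_of_nonneg_left (le_abs_self c) (by linarith)
    rw [hδe]
    linarith
  have main : ∀ ε : ℝ, 0 < ε → ∀ᶠ R in atTop,
      1 ≤ sSup ((fun x => h₁ (x + c * R) / h₂ x) '' Set.Ici (m * R)) /
            (h₁ ((m + c) * R) / h₂ (m * R)) ∧
      sSup ((fun x => h₁ (x + c * R) / h₂ x) '' Set.Ici (m * R)) /
            (h₁ ((m + c) * R) / h₂ (m * R)) ≤ Real.exp ε := by
    intro ε hε
    obtain ⟨X₁, hX₁, H₁⟩ := potter_h h₁ α₁ hrv₁ (ε / 2) δ (by positivity) hδ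
    obtain ⟨X₂, hX₂, H₂⟩ := potter_h h₂ α₂ hrv₂ (ε / 2) δ (by positivity) hδ
    filter_upwards [eventually_ge_atTop (X₁ / (m + c)), eventually_ge_atTop (X₂ / m),
      eventually_gt_atTop 0] with R hR₁ hR₂ hR
    rw [div_le_iff₀ (by assumption), mul_comm] at hR₁ hR₂
    obtain ⟨p₁, q₁⟩ := H₁ _ hR₁
    obtain ⟨p₂, q₂⟩ := H₂ _ hR₂
    have hF : 0 < h₁ ((m + c) * R) / h₂ (m * R) := by positivity
    have hub : ∀ z ∈ (fun x => h₁ (x + c * R) / h₂ x) '' Set.Ici (m * R),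
        z ≤ Real.exp ε * (h₁ ((m + c) * R) / h₂ (m * R)) := by
      rintro _ ⟨x, hx, rfl⟩
      have hx : m * R ≤ x := hx
      have hx' : (m + c) * R ≤ x + c * R := by linarith
      have r₁ := (H₁ _ (hR₁.trans hx')).1
      have r₂ := (H₂ _ (hR₂.trans hx)).1
      have s₁ := (abs_le.1 (q₁ _ hx')).2
      have s₂ := (abs_le.1 (q₂ _ hx)).1
      have s₃ := log_ineq (α₁ - δ) (α₂ + δ) c m R x (by linarith) (by linarith) hm0 hmc hR hx hcm
      show h₁ (x + c * R) / h₂ x ≤ _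
      rw [← Real.log_le_log_iff (by positivity) (by positivity),
        Real.log_mul (Real.exp_pos _).ne' hF.ne', Real.log_exp,
        Real.log_div r₁.ne' r₂.ne', Real.log_div p₁.ne' p₂.ne']
      linarith
    have hin : h₁ ((m + c) * R) / h₂ (m * R) ∈
        (fun x => h₁ (x + c * R) / h₂ x) '' Set.Ici (m * R) :=
      ⟨m * R, Set.self_mem_Ici, by simp only [add_mul]⟩
    constructor
    · rw [one_le_div hF]
      exact le_csSup ⟨_, hub⟩ hin
    · rw [div_le_iff₀ hF]
      exact csSup_le ⟨_, hin⟩ hub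
  rw [Metric.tendsto_nhds]
  intro e he
  filter_upwards [main (Real.log (1 + e / 2)) (Real.log_pos (by linarith))] with R hR
  rw [Real.exp_log (by linarith)] at hR
  rw [Real.dist_eq, abs_lt]
  constructor <;> linarith [hR.1, hR.2]
end

section
/- Let h : [0,∞) → ℝ be continuous and regularly varying (at infinity) with index α ∈ [0,1). Then, as R → ∞, (1/R²) ∫₀^R ∫₀^R h(|x−y|) dx dy ∼ 2h(R)/((2−α)(1−α)). -/
open Filter

/-- Baire step: locally uniform boundedness of increments. -/
lemma aux_baire (f : ℝ → ℝ) (hf : Continuous f)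
    (hlim : ∀ u : ℝ, Tendsto (fun x => f (x + u) - f x) atTop (nhds 0)) :
    ∃ d Y : ℝ, 0 < d ∧ ∀ y, Y ≤ y → ∀ u, 0 ≤ u → u ≤ d → |f (y + u) - f y| ≤ 2 := by
  let E : ℕ → Set ℝ := fun n => {u | ∀ x : ℝ, (n : ℝ) ≤ x → |f (x + u) - f x| ≤ 1}
  have hclosed : ∀ n, IsClosed (E n) := by
    intro n
    have : E n = ⋂ x : ℝ, ⋂ _ : (n : ℝ) ≤ x, {u | |f (x + u) - f x| ≤ 1} := by
      ext u; simp [E]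
    rw [this]
    refine isClosed_iInter fun x => isClosed_iInter fun _ => ?_
    exact isClosed_le (by fun_prop) continuous_const
  have hunion : (⋃ n, E n) = Set.univ := by
    refine Set.eq_univ_of_forall fun u => ?_
    have h1 : ∀ᶠ x in atTop, |f (x + u) - f x| ≤ 1 := by
      have h2 := (hlim u).abs
      rw [abs_zero] at h2
      exact h2.eventually (Iic_mem_nhds one_pos)
    obtain ⟨X, hX⟩ := eventually_atTop.1 h1
    obtain ⟨n, hn⟩ := exists_nat_ge X
    exact Set.mem_iUnion.2 ⟨n, fun x hx => hX x (hn.trans hx)⟩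
  obtain ⟨n, a, ha⟩ := nonempty_interior_of_iUnion_of_closed hclosed hunion
  rw [mem_interior_iff_mem_nhds, Metric.mem_nhds_iff] at ha
  obtain ⟨ε, hε, hball⟩ := ha
  refine ⟨ε / 2, n + a, by positivity, fun y hy u hu0 hu => ?_⟩
  have haE : a ∈ E n := hball (Metric.mem_ball_self hε)
  have hauE : a + u ∈ E n := hball (by
    rw [Metric.mem_ball, Real.dist_eq, add_sub_cancel_left, abs_of_nonneg hu0]; linarith)
  have h1 := haE (y - a) (by linarith)
  have h2 := hauE (y - a) (by linarith)
  rw [show y - a + a = y by ring] at h1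
  rw [show y - a + (a + u) = y + u by ring] at h2
  rw [abs_le] at *
  constructor <;> linarith [h1.1, h1.2, h2.1, h2.2]

lemma aux_unit (f : ℝ → ℝ) (hf : Continuous f)
    (hlim : ∀ u : ℝ, Tendsto (fun x => f (x + u) - f x) atTop (nhds 0)) :
    ∃ M Y : ℝ, 0 ≤ M ∧ ∀ y, Y ≤ y → ∀ u, 0 ≤ u → u ≤ 1 → |f (y + u) - f y| ≤ M := by
  obtain ⟨d, Y, hd, h⟩ := aux_baire f hf hlim
  have key : ∀ n : ℕ, ∀ y, Y ≤ y → ∀ u, 0 ≤ u → u ≤ n * d → |f (y + u) - f y| ≤ 2 * n := by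
    intro n
    induction n with
    | zero =>
      intro y hy u hu0 hu
      have : u = 0 := le_antisymm (by simpa using hu) hu0
      simp [this]
    | succ n ih =>
      intro y hy u hu0 hu
      push_cast at *
      by_cases hud : u ≤ d
      · have := h y hy u hu0 hud
        have hn : (0:ℝ) ≤ n := n.cast_nonneg
        linarith
      · push Not at hud
        have h1 := h y hy d hd.le le_rfl
        have h2 := ih (y + d) (by linarith) (u - d) (by linarith) (by linarith)
        rw [show y + d + (u - d) = y + u by ring] at h2
        rw [abs_le] at *
        constructor <;> linarith [h1.1, h1.2, h2.1, h2.2]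
  obtain ⟨n, hn⟩ := exists_nat_ge (1 / d)
  rw [div_le_iff₀ hd] at hn
  exact ⟨2 * n, Y, by positivity, fun y hy u hu0 hu => key n y hy u hu0 (hu.trans hn)⟩

lemma aux_potter (f : ℝ → ℝ) (hf : Continuous f)
    (hlim : ∀ u : ℝ, Tendsto (fun x => f (x + u) - f x) atTop (nhds 0)) (δ : ℝ) (hδ : 0 < δ) :
    ∃ M Y : ℝ, ∀ y x, Y ≤ y → y ≤ x → |f x - f y| ≤ M + δ * (x - y) := by
  obtain ⟨M, Y, hM, h⟩ := aux_unit f hf hlim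
  have h1 : ∀ᶠ x in atTop, |f (x + 1) - f x| ≤ δ := by
    have h2 := (hlim 1).abs
    rw [abs_zero] at h2
    exact h2.eventually (Iic_mem_nhds hδ)
  obtain ⟨X, hX⟩ := eventually_atTop.1 h1
  have key : ∀ n : ℕ, ∀ y x, max X Y ≤ y → y ≤ x → x ≤ y + n → |f x - f y| ≤ M + δ * (x - y) := by
    intro n
    induction n with
    | zero =>
      intro y x hy hyx hx
      have : x = y := le_antisymm (by simpa using hx) hyx
      simp [this, hM]
    | succ n ih =>
      intro y x hy hyx hx
      push_cast at *
      have hYy : Y ≤ y := (le_max_right _ _).trans hy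
      have hXy : X ≤ y := (le_max_left _ _).trans hy
      by_cases hc : x ≤ y + 1
      · have h3 := h y hYy (x - y) (by linarith) (by linarith)
        rw [show y + (x - y) = x by ring] at h3
        have : 0 ≤ δ * (x - y) := mul_nonneg hδ.le (by linarith)
        linarith
      · push Not at hc
        have h3 := ih y (x - 1) hy (by linarith) (by linarith)
        have h4 := hX (x - 1) (by linarith)
        rw [show x - 1 + 1 = x by ring] at h4
        rw [abs_le] at *
        constructor <;> linarith [h3.1, h3.2, h4.1, h4.2]
  refine ⟨M, max X Y, fun y x hy hyx => ?_⟩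
  obtain ⟨n, hn⟩ := exists_nat_ge (x - y)
  exact key n y x hy hyx (by linarith)

/-- Potter bound for slowly varying functions. -/
lemma aux_potter_L (L : ℝ → ℝ) (hL : SlowlyVarying L) (δ : ℝ) (hδ : 0 < δ) :
    ∃ C X : ℝ, 0 < C ∧ 0 < X ∧ ∀ u R, X ≤ u → u ≤ R → L u ≤ C * (u / R) ^ (-δ) * L R := by
  obtain ⟨hc, hpos, hlim⟩ := hL
  let f : ℝ → ℝ := fun x => Real.log (L (Real.exp x))
  have hf : Continuous f := by
    refine Continuous.log ?_ fun x => (hpos _ (Real.exp_pos x)).ne'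
    exact hc.comp_continuous Real.continuous_exp fun x => Real.exp_pos x
  have hflim : ∀ u : ℝ, Tendsto (fun x => f (x + u) - f x) atTop (nhds 0) := by
    intro u
    have h1 := (hlim (Real.exp u) (Real.exp_pos u)).comp Real.tendsto_exp_atTop
    have h2 := h1.log one_ne_zero
    rw [Real.log_one] at h2
    refine h2.congr fun x => ?_
    simp only [Function.comp, f]
    rw [← Real.exp_add, Real.log_div (hpos _ (Real.exp_pos _)).ne' (hpos _ (Real.exp_pos _)).ne',
      add_comm u x]
  obtain ⟨M, Y, h⟩ := aux_potter f hf hflim δ hδ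
  refine ⟨Real.exp M, Real.exp Y, Real.exp_pos _, Real.exp_pos _, fun u R hu huR => ?_⟩
  have hu0 : 0 < u := (Real.exp_pos _).trans_le hu
  have hR0 : 0 < R := hu0.trans_le huR
  have h1 := h (Real.log u) (Real.log R) ((Real.le_log_iff_exp_le hu0).2 hu)
    (Real.log_le_log hu0 huR)
  simp only [f, Real.exp_log hu0, Real.exp_log hR0] at h1
  have h2 := (abs_le.1 h1).1
  rw [← Real.exp_log (hpos u hu0)]
  conv_rhs => rw [← Real.exp_log (hpos R hR0)]
  rw [Real.rpow_def_of_pos (div_pos hu0 hR0), ← Real.exp_add, ← Real.exp_add, Real.exp_le_exp,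
    Real.log_div hu0.ne' hR0.ne']
  nlinarith

/-- Domination for `h`. -/
lemma aux_dom (h : ℝ → ℝ) (α : ℝ) (hcont : ContinuousOn h (Set.Ici 0))
    (hrv : RegularlyVarying h α) (hα0 : 0 ≤ α) (δ : ℝ) (hδ : 0 < δ) :
    ∃ C X : ℝ, 0 < X ∧ ∀ R, X ≤ R → 0 < h R ∧
      ∀ u, 0 < u → u ≤ R → |h u| ≤ C * (u / R) ^ (-(α + δ)) * h R := by
  obtain ⟨-, L, hL, hlim⟩ := hrv
  obtain ⟨C, X, hC, hX, hP⟩ := aux_potter_L L hL δ hδ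
  have hLpos := hL.2.1
  have e1 : ∀ᶠ x in atTop, h x / (x ^ (-α) * L x) ∈ Set.Ioo (1/2 : ℝ) 2 :=
    hlim.eventually (Ioo_mem_nhds (by norm_num) (by norm_num))
  obtain ⟨X', hX'⟩ := eventually_atTop.1 e1
  set X1 := max X X' with hX1
  have hX1X : X ≤ X1 := le_max_left _ _
  have hX1pos : 0 < X1 := hX.trans_le hX1X
  have hb : ∀ x, X1 ≤ x → 1/2 * (x ^ (-α) * L x) < h x ∧ h x < 2 * (x ^ (-α) * L x) := by
    intro x hx
    have hx0 : 0 < x := hX1pos.trans_le hx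
    have hp : 0 < x ^ (-α) * L x := mul_pos (Real.rpow_pos_of_pos hx0 _) (hLpos x hx0)
    have := hX' x ((le_max_right _ _).trans hx)
    exact ⟨(lt_div_iff₀ hp).1 this.1, (div_lt_iff₀ hp).1 this.2⟩
  have hhpos : ∀ x, X1 ≤ x → 0 < h x := by
    intro x hx
    have hx0 : 0 < x := hX1pos.trans_le hx
    have hp : 0 < x ^ (-α) * L x := mul_pos (Real.rpow_pos_of_pos hx0 _) (hLpos x hx0)
    linarith [(hb x hx).1]
  have hbig : ∀ u R, X1 ≤ u → u ≤ R → h u ≤ 4 * C * (u / R) ^ (-(α + δ)) * h R := by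
    intro u R hu huR
    have hu0 : 0 < u := hX1pos.trans_le hu
    have hR0 : 0 < R := hu0.trans_le huR
    have h1 := (hb u hu).2
    have h2 := (hb R (hu.trans huR)).1
    have h3 := hP u R (hX1X.trans hu) huR
    have h4 : u ^ (-α) = (u / R) ^ (-α) * R ^ (-α) := by
      rw [← Real.mul_rpow (div_pos hu0 hR0).le hR0.le, div_mul_cancel₀ _ hR0.ne']
    have hq : 0 < u / R := div_pos hu0 hR0
    rw [neg_add, Real.rpow_add hq]
    have hA : 0 < (u / R) ^ (-α) := Real.rpow_pos_of_pos hq _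
    have hB : 0 < (u / R) ^ (-δ) := Real.rpow_pos_of_pos hq _
    calc h u ≤ 2 * (u ^ (-α) * L u) := h1.le
      _ ≤ 2 * (u ^ (-α) * (C * (u / R) ^ (-δ) * L R)) := by
        have := Real.rpow_pos_of_pos hu0 (-α)
        gcongr
      _ = 4 * C * ((u / R) ^ (-α) * (u / R) ^ (-δ)) * (1 / 2 * (R ^ (-α) * L R)) := by
        rw [h4]; ring
      _ ≤ _ := by gcongr
  obtain ⟨K, hK⟩ := (isCompact_Icc (a := (0:ℝ)) (b := X1)).exists_bound_of_continuousOn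
    (hcont.mono fun x hx => hx.1)
  have hh1 := hhpos X1 le_rfl
  have hK0 : 0 ≤ K := (norm_nonneg _).trans (hK X1 ⟨hX1pos.le, le_rfl⟩)
  refine ⟨4 * C * max 1 (K / h X1), X1, hX1pos, fun R hR => ⟨hhpos R hR, fun u hu0 huR => ?_⟩⟩
  have hR0 : 0 < R := hX1pos.trans_le hR
  have hhR := hhpos R hR
  have hq : 0 < (u / R) ^ (-(α + δ)) := Real.rpow_pos_of_pos (div_pos hu0 hR0) _
  rcases le_total X1 u with hu | hu
  · rw [abs_of_pos (hhpos u hu)]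
    calc h u ≤ 4 * C * 1 * (u / R) ^ (-(α + δ)) * h R := by
          rw [mul_one]; exact hbig u R hu huR
      _ ≤ _ := by gcongr; exact le_max_left _ _
  · have h1 := hbig X1 R le_rfl hR
    calc |h u| ≤ K := hK u ⟨hu0.le, hu⟩
      _ = (K / h X1) * h X1 := by field_simp
      _ ≤ (K / h X1) * (4 * C * (X1 / R) ^ (-(α + δ)) * h R) := by gcongr
      _ ≤ (K / h X1) * (4 * C * (u / R) ^ (-(α + δ)) * h R) := by
          have : (X1 / R) ^ (-(α + δ)) ≤ (u / R) ^ (-(α + δ)) :=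
            Real.rpow_le_rpow_of_nonpos (div_pos hu0 hR0) (by gcongr) (by linarith)
          gcongr
      _ = 4 * C * (K / h X1) * (u / R) ^ (-(α + δ)) * h R := by ring
      _ ≤ _ := by gcongr; exact le_max_right _ _

lemma aux_ratio (h : ℝ → ℝ) (α : ℝ) (hrv : RegularlyVarying h α) (t : ℝ) (ht : 0 < t) :
    Tendsto (fun R => h (t * R) / h R) atTop (nhds (t ^ (-α))) := by
  obtain ⟨-, L, hL, hlim⟩ := hrv
  have hLpos := hL.2.1
  have h1 : Tendsto (fun R : ℝ => t * R) atTop atTop := tendsto_id.const_mul_atTop ht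
  have h2 := ((hlim.comp h1).div hlim one_ne_zero).mul ((hL.2.2 t ht).const_mul (t ^ (-α)))
  rw [div_one, one_mul, mul_one] at h2
  refine h2.congr' ?_
  have e1 : ∀ᶠ x in atTop, h x / (x ^ (-α) * L x) ∈ Set.Ioi (0 : ℝ) :=
    hlim.eventually (Ioi_mem_nhds (by norm_num))
  filter_upwards [eventually_gt_atTop 0, e1] with R hR hpos
  have hR1 : 0 < R ^ (-α) := Real.rpow_pos_of_pos hR _
  have ht1 : 0 < t ^ (-α) := Real.rpow_pos_of_pos ht _
  have hL1 := hLpos R hR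
  have hL2 := hLpos (t * R) (mul_pos ht hR)
  have hhR : h R ≠ 0 := by
    intro h0
    simp [h0] at hpos
  simp only [Function.comp, Pi.div_apply]
  rw [Real.mul_rpow ht.le hR.le]
  field_simp

lemma aux_double (g : ℝ → ℝ) (hg : Continuous g) (heven : ∀ x, g (-x) = g x) (R : ℝ) :
    (∫ x in (0:ℝ)..R, ∫ y in (0:ℝ)..R, g (x - y)) = 2 * (R ^ 2 * ∫ t in (0:ℝ)..1, (1 - t) * g (t * R)) := by
  let H : ℝ → ℝ := fun x => ∫ u in (0:ℝ)..x, g u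
  have hH : ∀ x, HasDerivAt H (g x) x := fun x =>
    intervalIntegral.integral_hasDerivAt_right (hg.intervalIntegrable _ _)
      (hg.stronglyMeasurableAtFilter _ _) hg.continuousAt
  have hHc : Continuous H := continuous_iff_continuousAt.2 fun x => (hH x).continuousAt
  have h1 : ∀ x, (∫ y in (0:ℝ)..R, g (x - y)) = H x + H (R - x) := by
    intro x
    rw [intervalIntegral.integral_comp_sub_left (fun u => g u) x, sub_zero,
      ← intervalIntegral.integral_add_adjacent_intervals (hg.intervalIntegrable (x - R) 0)
        (hg.intervalIntegrable 0 x), add_comm]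
    congr 1
    have := intervalIntegral.integral_comp_neg (a := 0) (b := R - x) (fun u => g u)
    simp only [heven, neg_zero, neg_sub] at this
    exact this.symm
  simp only [h1]
  rw [intervalIntegral.integral_add (hHc.intervalIntegrable _ _)
    ((show Continuous fun x => H (R - x) by fun_prop).intervalIntegrable _ _),
    intervalIntegral.integral_comp_sub_left (fun u => H u) R, sub_zero, sub_self, ← two_mul]
  congr 1
  have h2 := intervalIntegral.integral_mul_deriv_eq_deriv_mul (a := 0) (b := R)
    (u := fun x => R - x) (v := H) (u' := fun _ => -1) (v' := g)
    (fun x _ => by simpa using (hasDerivAt_id x).const_sub R) (fun x _ => hH x)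
    (continuous_const.intervalIntegrable _ _) (hg.intervalIntegrable _ _)
  have hH0 : H 0 = 0 := by simp [H]
  have h3 : (∫ x in (0:ℝ)..R, H x) = ∫ x in (0:ℝ)..R, (R - x) * g x := by
    rw [h2, hH0]; simp
  rw [h3]
  have h4 := intervalIntegral.mul_integral_comp_mul_right (a := 0) (b := 1)
    (f := fun u => (R - u) * g u) R
  rw [zero_mul, one_mul] at h4
  rw [← h4, pow_two, mul_assoc]
  congr 1
  rw [← intervalIntegral.integral_const_mul]
  congr 1
  ext t
  ring

lemma aux_beta (α : ℝ) (hα1 : α < 1) :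
    (∫ t in (0:ℝ)..1, (1 - t) * t ^ (-α)) = 1 / ((2 - α) * (1 - α)) := by
  have h1 : (∫ t in (0:ℝ)..1, (1 - t) * t ^ (-α)) = ∫ t in (0:ℝ)..1, (t ^ (-α) - t ^ (1 - α)) := by
    refine intervalIntegral.integral_congr_ae (MeasureTheory.ae_of_all _ fun t ht => ?_)
    rw [Set.uIoc_of_le zero_le_one] at ht
    rw [sub_eq_add_neg 1 α, Real.rpow_add ht.1, Real.rpow_one]
    ring
  rw [h1, intervalIntegral.integral_sub
    (intervalIntegral.intervalIntegrable_rpow' (by linarith))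
    (intervalIntegral.intervalIntegrable_rpow' (by linarith)),
    integral_rpow (Or.inl (by linarith)), integral_rpow (Or.inl (by linarith)),
    Real.one_rpow, Real.one_rpow, Real.zero_rpow (by linarith), Real.zero_rpow (by linarith)]
  have : 1 - α ≠ 0 := by linarith
  have : 2 - α ≠ 0 := by linarith
  have : -α + 1 ≠ 0 := by linarith
  have : 1 - α + 1 ≠ 0 := by linarith
  field_simp
  ring

/-- if `h : [0,∞) → ℝ` is continuous and regularly varying with index
`α ∈ [0,1)`, then `(1/R²) ∫₀^R ∫₀^R h(|x-y|) dx dy ∼ 2 h(R) / ((2-α)(1-α))` as `R → ∞`. -/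
theorem statement1 (h : ℝ → ℝ) (α : ℝ)
    (hcont : ContinuousOn h (Set.Ici 0))
    (hrv : RegularlyVarying h α) (hα0 : 0 ≤ α) (hα1 : α < 1) :
    Tendsto (fun R =>
        ((1 / R ^ 2) * ∫ x in (0:ℝ)..R, ∫ y in (0:ℝ)..R, h |x - y|) /
          (2 * h R / ((2 - α) * (1 - α))))
      atTop (nhds 1) := by
  have hg : Continuous fun x => h |x| := hcont.comp_continuous continuous_abs fun x => abs_nonneg x
  obtain ⟨C, X, hX, hdom⟩ := aux_dom h α hcont hrv hα0 ((1 - α) / 2) (by linarith)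
  have hD : Tendsto (fun R => ∫ t in (0:ℝ)..1, (1 - t) * (h |t * R| / h R)) atTop
      (nhds (∫ t in (0:ℝ)..1, (1 - t) * t ^ (-α))) := by
    refine intervalIntegral.tendsto_integral_filter_of_dominated_convergence
      (fun t => C * t ^ (-(α + (1 - α) / 2))) ?_ ?_ ?_ ?_
    · refine Eventually.of_forall fun R => Continuous.aestronglyMeasurable ?_
      have : Continuous fun t : ℝ => h |t * R| := hg.comp (continuous_mul_const R)
      exact (continuous_const.sub continuous_id).mul (this.div_const _)
    · filter_upwards [eventually_ge_atTop X] with R hR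
      refine MeasureTheory.ae_of_all _ fun t ht => ?_
      rw [Set.uIoc_of_le zero_le_one] at ht
      obtain ⟨hhR, hd⟩ := hdom R hR
      have hR0 : 0 < R := hX.trans_le hR
      have htR : 0 < t * R := mul_pos ht.1 hR0
      have h1 := hd (t * R) htR (by nlinarith [ht.2])
      rw [mul_div_cancel_right₀ _ hR0.ne', ← div_le_iff₀ hhR] at h1
      rw [abs_of_pos htR, norm_mul, norm_div, Real.norm_eq_abs, Real.norm_eq_abs,
        Real.norm_eq_abs, abs_of_pos hhR, abs_of_nonneg (by linarith [ht.2])]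
      refine le_trans (mul_le_of_le_one_left (by positivity) (by linarith [ht.1])) h1
    · exact (intervalIntegral.intervalIntegrable_rpow' (by linarith)).const_mul C
    · refine MeasureTheory.ae_of_all _ fun t ht => ?_
      rw [Set.uIoc_of_le zero_le_one] at ht
      refine ((aux_ratio h α hrv t ht.1).const_mul (1 - t)).congr' ?_
      filter_upwards [eventually_gt_atTop 0] with R hR
      rw [abs_of_pos (mul_pos ht.1 hR)]
  rw [aux_beta α hα1] at hD
  have h1 : 1 - α ≠ 0 := by linarith
  have h2 : 2 - α ≠ 0 := by linarith
  have hF := hD.const_mul ((2 - α) * (1 - α))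
  rw [mul_one_div_cancel (mul_ne_zero h2 h1)] at hF
  refine hF.congr' ?_
  filter_upwards [eventually_ge_atTop X] with R hR
  have hR0 : 0 < R := hX.trans_le hR
  have hhR := (hdom R hR).1
  rw [aux_double (fun x => h |x|) hg (fun x => by rw [abs_neg]) R]
  have h3 : (∫ t in (0:ℝ)..1, (1 - t) * (h |t * R| / h R)) =
      (∫ t in (0:ℝ)..1, (1 - t) * h |t * R|) / h R := by
    rw [← intervalIntegral.integral_div]
    congr 1
    ext t
    ring
  rw [h3]
  generalize (∫ t in (0:ℝ)..1, (1 - t) * h |t * R|) = I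
  field_simp
end

section
/- Let γ < 1 and let h : [0,∞) → ℝ be continuous with h(x) ∼ x^{−1} (log x)^{−γ} as x → ∞. Let r : (0,∞) → [0,∞) satisfy r(R) = R^{o(1)} as R → ∞ (i.e. log(max(r(R),2))/log R → 0). Then, as R → ∞, (1/(2R)) ∫₀^R ∫₀^R h(|x−y|) 1_{|x−y| ≥ r(R)} dx dy ∼ ∫₀^R h(x) dx, and min_{z ∈ [0, r(R)]} ∫₀^R h(√(x² + z²)) dx ∼ ∫₀^R h(x) dx. -/
open Filter

namespace S3

open Topology Asymptotics MeasureTheory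

noncomputable def kk (γ x : ℝ) : ℝ := x⁻¹ * Real.log x ^ (-γ)
noncomputable def LL (γ x : ℝ) : ℝ := Real.log x ^ (1 - γ) / (1 - γ)

lemma kk_pos (γ : ℝ) {x : ℝ} (hx : 2 ≤ x) : 0 < kk γ x := by
  have : 0 < Real.log x := Real.log_pos (by linarith)
  unfold kk
  have h0 : 0 < x := by linarith
  positivity

lemma LL_pos {γ : ℝ} (hγ : γ < 1) {x : ℝ} (hx : 2 ≤ x) : 0 < LL γ x := by
  have : 0 < Real.log x := Real.log_pos (by linarith)
  have h1 : 0 < 1 - γ := by linarith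
  unfold LL
  positivity

lemma LL_mono {γ : ℝ} (hγ : γ < 1) {x y : ℝ} (hx : 2 ≤ x) (hxy : x ≤ y) : LL γ x ≤ LL γ y := by
  have : 0 < Real.log x := Real.log_pos (by linarith)
  have h1 : 0 < 1 - γ := by linarith
  have h2 : Real.log x ≤ Real.log y := Real.log_le_log (by linarith) hxy
  unfold LL
  gcongr

lemma LL_tendsto {γ : ℝ} (hγ : γ < 1) : Tendsto (LL γ) atTop atTop := by
  have h1 : 0 < 1 - γ := by linarith
  exact ((tendsto_rpow_atTop h1).comp Real.tendsto_log_atTop).atTop_div_const h1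

lemma LL_deriv {γ : ℝ} (hγ : γ < 1) {x : ℝ} (hx : 2 ≤ x) : HasDerivAt (LL γ) (kk γ x) x := by
  have h0 : 0 < Real.log x := Real.log_pos (by linarith)
  have h1 : 0 < 1 - γ := by linarith
  have := ((Real.hasDerivAt_log (show x ≠ 0 by linarith)).rpow_const (p := 1 - γ)
    (Or.inl h0.ne')).div_const (1 - γ)
  have e : kk γ x = x⁻¹ * (1 - γ) * Real.log x ^ (1 - γ - 1) / (1 - γ) := by
    unfold kk
    rw [show 1 - γ - 1 = -γ by ring]
    field_simp
  rw [e]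
  exact this

lemma kk_contAt (γ : ℝ) {x : ℝ} (hx : 2 ≤ x) : ContinuousAt (kk γ) x := by
  have h0 : 0 < Real.log x := Real.log_pos (by linarith)
  have hx0 : x ≠ 0 := by linarith
  unfold kk
  exact (continuousAt_inv₀ hx0).mul ((Real.continuousAt_log hx0).rpow_const (Or.inl h0.ne'))

lemma kk_int (γ : ℝ) {p q : ℝ} (hp : 2 ≤ p) (hpq : p ≤ q) :
    IntervalIntegrable (kk γ) volume p q := by
  apply ContinuousOn.intervalIntegrable
  intro x hx
  rw [Set.uIcc_of_le hpq] at hx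
  exact (kk_contAt γ (hp.trans hx.1)).continuousWithinAt

lemma kk_integral {γ : ℝ} (hγ : γ < 1) {p q : ℝ} (hp : 2 ≤ p) (hpq : p ≤ q) :
    ∫ x in p..q, kk γ x = LL γ q - LL γ p := by
  apply intervalIntegral.integral_eq_sub_of_hasDerivAt
  · intro x hx
    rw [Set.uIcc_of_le hpq] at hx
    exact LL_deriv hγ (hp.trans hx.1)
  · exact kk_int γ hp hpq

lemma ev_close {γ : ℝ} {H : ℝ → ℝ}
    (hasymp : Tendsto (fun x => H x / kk γ x) atTop (𝓝 1)) {ε : ℝ} (hε : 0 < ε) :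
    ∀ᶠ x in atTop, |H x - kk γ x| ≤ ε * kk γ x := by
  filter_upwards [(Metric.tendsto_nhds.1 hasymp) ε hε, eventually_ge_atTop 2] with x hx h2
  have hk := kk_pos γ h2
  rw [Real.dist_eq] at hx
  have : H x - kk γ x = (H x / kk γ x - 1) * kk γ x := by field_simp
  rw [this, abs_mul, abs_of_pos hk]
  gcongr

lemma int_equiv {γ : ℝ} (hγ : γ < 1) {H : ℝ → ℝ} (hc : Continuous H)
    (hasymp : Tendsto (fun x => H x / kk γ x) atTop (𝓝 1)) :
    (fun R => ∫ x in (0:ℝ)..R, H x) ~[atTop] LL γ := by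
  unfold IsEquivalent
  rw [isLittleO_iff]
  intro ε hε
  obtain ⟨x0, hx0⟩ := eventually_atTop.1 ((ev_close hasymp (half_pos hε)).and (eventually_ge_atTop 2))
  have h20 : 2 ≤ x0 := (hx0 x0 le_rfl).2
  set C := |(∫ x in (0:ℝ)..x0, H x) - LL γ x0| with hC
  filter_upwards [eventually_ge_atTop x0, (LL_tendsto hγ).eventually_ge_atTop (C / (ε / 2))] with R hR hCR
  have hLR := LL_pos hγ (h20.trans hR)
  have hL0 := LL_pos hγ h20
  rw [Real.norm_eq_abs, Real.norm_eq_abs, abs_of_pos hLR, Pi.sub_apply]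
  have e1 : ∫ x in (x0)..R, (H x - kk γ x) = (∫ x in (x0)..R, H x) - (LL γ R - LL γ x0) := by
    rw [intervalIntegral.integral_sub (hc.intervalIntegrable _ _) (kk_int γ h20 hR), kk_integral hγ h20 hR]
  have e2 : (∫ x in (0:ℝ)..R, H x) = (∫ x in (0:ℝ)..x0, H x) + ∫ x in (x0)..R, H x :=
    (intervalIntegral.integral_add_adjacent_intervals (hc.intervalIntegrable _ _) (hc.intervalIntegrable _ _)).symm
  have e3 : |∫ x in (x0)..R, (H x - kk γ x)| ≤ ∫ x in (x0)..R, (ε / 2) * kk γ x := by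
    rw [← Real.norm_eq_abs]
    apply intervalIntegral.norm_integral_le_of_norm_le hR
    · refine Eventually.of_forall fun x hx => ?_
      exact (hx0 x hx.1.le).1
    · exact (kk_int γ h20 hR).const_mul _
  rw [intervalIntegral.integral_const_mul, kk_integral hγ h20 hR] at e3
  have e4 : (∫ x in (0:ℝ)..R, H x) - LL γ R =
      ((∫ x in (0:ℝ)..x0, H x) - LL γ x0) + ∫ x in (x0)..R, (H x - kk γ x) := by
    rw [e1, e2]; ring
  have e5 : C ≤ ε / 2 * LL γ R := by
    rw [div_le_iff₀ (half_pos hε)] at hCR; linarith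
  rw [e4]
  have := abs_add_le ((∫ x in (0:ℝ)..x0, H x) - LL γ x0) (∫ x in (x0)..R, (H x - kk γ x))
  have : ε / 2 * (LL γ R - LL γ x0) ≤ ε / 2 * LL γ R := by
    gcongr; linarith
  linarith

lemma abs_asymp {γ : ℝ} {H : ℝ → ℝ}
    (hasymp : Tendsto (fun x => H x / kk γ x) atTop (𝓝 1)) :
    Tendsto (fun x => |H x| / kk γ x) atTop (𝓝 1) := by
  have := hasymp.abs
  rw [abs_one] at this
  refine this.congr' ?_
  filter_upwards [eventually_ge_atTop 2] with x hx
  rw [abs_div, abs_of_pos (kk_pos γ hx)]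

lemma LL_ratio_zero {γ : ℝ} (hγ : γ < 1) {s : ℝ → ℝ} (hs : ∀ R, 2 ≤ s R)
    (hro : Tendsto (fun R => Real.log (s R) / Real.log R) atTop (𝓝 0)) :
    Tendsto (fun R => LL γ (s R) / LL γ R) atTop (𝓝 0) := by
  have h1 : 0 < 1 - γ := by linarith
  have := hro.rpow_const (p := 1 - γ) (Or.inr h1.le)
  rw [Real.zero_rpow h1.ne'] at this
  refine this.congr' ?_
  filter_upwards [eventually_ge_atTop 2] with R hR
  have h2 : 0 < Real.log (s R) := Real.log_pos (by linarith [hs R])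
  have h3 : 0 < Real.log R := Real.log_pos (by linarith)
  rw [Real.div_rpow h2.le h3.le]
  unfold LL
  field_simp

lemma LL_ratio_one {γ : ℝ} (hγ : γ < 1) {u : ℝ} (hu : 0 < u) :
    Tendsto (fun R => LL γ (R * u) / LL γ R) atTop (𝓝 1) := by
  have h1 : 0 < 1 - γ := by linarith
  have h0 : Tendsto (fun R => 1 + Real.log u / Real.log R) atTop (𝓝 1) := by
    simpa using (tendsto_const_nhds (x := (1:ℝ))).add
      (Tendsto.const_div_atTop Real.tendsto_log_atTop (Real.log u))
  have := h0.rpow_const (p := 1 - γ) (Or.inr h1.le)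
  rw [Real.one_rpow] at this
  refine this.congr' ?_
  filter_upwards [eventually_ge_atTop 2, eventually_ge_atTop (2 / u)] with R hR hRu
  rw [div_le_iff₀ hu] at hRu
  have h2 : 0 < Real.log (R * u) := Real.log_pos (by linarith)
  have h3 : 0 < Real.log R := Real.log_pos (by linarith)
  have : 1 + Real.log u / Real.log R = Real.log (R * u) / Real.log R := by
    rw [Real.log_mul (by linarith) hu.ne']; field_simp
  rw [this, Real.div_rpow h2.le h3.le]
  unfold LL
  field_simp

lemma M_mono {H : ℝ → ℝ} (hc : Continuous H) {x y : ℝ} (hxy : x ≤ y) :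
    ∫ t in (0:ℝ)..x, |H t| ≤ ∫ t in (0:ℝ)..y, |H t| := by
  rw [← intervalIntegral.integral_add_adjacent_intervals (b := x) (c := y)
    (hc.abs.intervalIntegrable _ _) (hc.abs.intervalIntegrable _ _)]
  have := intervalIntegral.integral_nonneg (μ := volume) hxy (f := fun t => |H t|) (fun _ _ => abs_nonneg _)
  linarith

lemma M_bound {γ : ℝ} (hγ : γ < 1) {H : ℝ → ℝ} (hc : Continuous H)
    (hasymp : Tendsto (fun x => H x / kk γ x) atTop (𝓝 1)) :
    ∃ C, 0 < C ∧ ∀ x, 2 ≤ x → ∫ t in (0:ℝ)..x, |H t| ≤ C * LL γ x := by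
  have h := int_equiv hγ hc.abs (abs_asymp hasymp)
  have h := isLittleO_iff.1 h.isLittleO one_pos
  obtain ⟨X, hX⟩ := eventually_atTop.1 (h.and (eventually_ge_atTop 2))
  have hX2 := (hX X le_rfl).2
  have h2 := LL_pos hγ (le_refl (2:ℝ))
  refine ⟨max 2 ((∫ t in (0:ℝ)..X, |H t|) / LL γ 2), by positivity, fun x hx => ?_⟩
  have hL := LL_pos hγ hx
  rcases le_total X x with hXx | hXx
  · have := (hX x hXx).1
    rw [Real.norm_eq_abs, Real.norm_eq_abs, abs_of_pos hL, Pi.sub_apply] at this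
    have := (abs_le.1 this).2
    have : 2 * LL γ x ≤ max 2 ((∫ t in (0:ℝ)..X, |H t|) / LL γ 2) * LL γ x := by
      gcongr; exact le_max_left _ _
    linarith
  · have h3 := M_mono hc hXx
    have h4 : 0 ≤ ∫ t in (0:ℝ)..X, |H t| :=
      intervalIntegral.integral_nonneg (by linarith) (fun _ _ => abs_nonneg _)
    have h5 := LL_mono hγ (le_refl (2:ℝ)) hx
    calc _ ≤ _ := h3
      _ = ((∫ t in (0:ℝ)..X, |H t|) / LL γ 2) * LL γ 2 := by field_simp
      _ ≤ ((∫ t in (0:ℝ)..X, |H t|) / LL γ 2) * LL γ x := by gcongr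
      _ ≤ _ := by gcongr; exact le_max_right _ _

lemma M_ratio {γ : ℝ} (hγ : γ < 1) {H : ℝ → ℝ} (hc : Continuous H)
    (hasymp : Tendsto (fun x => H x / kk γ x) atTop (𝓝 1)) {s : ℝ → ℝ} (hs : ∀ R, 2 ≤ s R)
    (hro : Tendsto (fun R => Real.log (s R) / Real.log R) atTop (𝓝 0)) :
    Tendsto (fun R => (∫ t in (0:ℝ)..(s R), |H t|) / LL γ R) atTop (𝓝 0) := by
  obtain ⟨C, hC, hM⟩ := M_bound hγ hc hasymp
  have h1 := (LL_ratio_zero hγ hs hro).const_mul C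
  rw [mul_zero] at h1
  refine tendsto_of_tendsto_of_tendsto_of_le_of_le' tendsto_const_nhds h1 ?_ ?_
  · filter_upwards [eventually_ge_atTop 2] with R hR
    exact div_nonneg (intervalIntegral.integral_nonneg (by linarith [hs R]) (fun _ _ => abs_nonneg _))
      (LL_pos hγ hR).le
  · filter_upwards [eventually_ge_atTop 2] with R hR
    have := LL_pos hγ hR
    rw [← mul_div_assoc]
    gcongr
    exact hM _ (hs R)

/-- averages -/
lemma avg {γ : ℝ} (hγ : γ < 1) {H : ℝ → ℝ} (hc : Continuous H)
    (hasymp : Tendsto (fun x => H x / kk γ x) atTop (𝓝 1)) :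
    Tendsto (fun R => (1 / R * ∫ x in (0:ℝ)..R, ∫ t in (0:ℝ)..x, H t) / LL γ R) atTop (𝓝 1) := by
  obtain ⟨C, hC, hM⟩ := M_bound hγ hc hasymp
  have hI : Continuous fun x => ∫ t in (0:ℝ)..x, H t :=
    intervalIntegral.continuous_primitive (fun a b => hc.intervalIntegrable a b) 0
  have key : Tendsto (fun R => ∫ u in (0:ℝ)..1, (∫ t in (0:ℝ)..(R * u), H t) / LL γ R) atTop
      (𝓝 (∫ u in (0:ℝ)..1, 1)) := by
    apply intervalIntegral.tendsto_integral_filter_of_dominated_convergence (fun _ => C)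
    · refine Eventually.of_forall fun R => ?_
      exact ((hI.comp (continuous_const.mul continuous_id)).div_const _).aestronglyMeasurable
    · filter_upwards [eventually_ge_atTop 2] with R hR
      refine Eventually.of_forall fun u hu => ?_
      rw [Set.uIoc_of_le zero_le_one] at hu
      have hL := LL_pos hγ hR
      rw [Real.norm_eq_abs, abs_div, abs_of_pos hL, div_le_iff₀ hL]
      have h1 : R * u ≤ R := by nlinarith [hu.2]
      have h0 : 0 ≤ R * u := by nlinarith [hu.1]
      calc _ ≤ ∫ t in (0:ℝ)..(R * u), |H t| := intervalIntegral.abs_integral_le_integral_abs h0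
        _ ≤ _ := M_mono hc h1
        _ ≤ _ := hM R hR
    · simp
    · refine Eventually.of_forall fun u hu => ?_
      rw [Set.uIoc_of_le zero_le_one] at hu
      have hmul : Tendsto (fun R : ℝ => R * u) atTop atTop := tendsto_id.atTop_mul_const hu.1
      have h1 := (int_equiv hγ hc hasymp).comp_tendsto hmul
      have h2 : LL γ ∘ (fun R : ℝ => R * u) ~[atTop] LL γ := by
        rw [isEquivalent_iff_tendsto_one]
        · exact LL_ratio_one hγ hu.1
        · filter_upwards [eventually_ge_atTop 2] with R hR using (LL_pos hγ hR).ne'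
      have h3 := h1.trans h2
      rw [isEquivalent_iff_tendsto_one] at h3
      · exact h3
      · filter_upwards [eventually_ge_atTop 2] with R hR using (LL_pos hγ hR).ne'
  have e : (∫ u in (0:ℝ)..1, (1:ℝ)) = 1 := by simp
  rw [e] at key
  refine key.congr' ?_
  filter_upwards [eventually_ge_atTop 2] with R hR
  have hR0 : R ≠ 0 := by linarith
  rw [intervalIntegral.integral_div,
    intervalIntegral.integral_comp_mul_left (fun x => ∫ t in (0:ℝ)..x, H t) hR0]
  simp

lemma dbl {g : ℝ → ℝ} (hg : ∀ a b, IntervalIntegrable g volume a b) (heven : ∀ x, g (-x) = g x)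
    (R : ℝ) : ∫ x in (0:ℝ)..R, ∫ y in (0:ℝ)..R, g (x - y) =
      2 * ∫ x in (0:ℝ)..R, ∫ t in (0:ℝ)..x, g t := by
  have hI : Continuous fun x => ∫ t in (0:ℝ)..x, g t :=
    intervalIntegral.continuous_primitive hg 0
  have h1 : ∀ x, ∫ y in (0:ℝ)..R, g (x - y) =
      (∫ t in (0:ℝ)..x, g t) + ∫ t in (0:ℝ)..(R - x), g t := by
    intro x
    rw [intervalIntegral.integral_comp_sub_left (fun t => g t) x]
    have e : ∫ t in (0:ℝ)..(R - x), g t = ∫ t in (x - R)..0, g t := by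
      have := intervalIntegral.integral_comp_neg (a := 0) (b := R - x) (fun t => g t)
      simp only [heven, neg_zero, neg_sub] at this
      exact this
    rw [e, sub_zero, add_comm, intervalIntegral.integral_add_adjacent_intervals (hg _ _) (hg _ _)]
  simp_rw [h1]
  have hI2 : Continuous fun x => ∫ t in (0:ℝ)..(R - x), g t :=
    hI.comp (continuous_const.sub continuous_id)
  rw [intervalIntegral.integral_add (hI.intervalIntegrable _ _)
    (hI2.intervalIntegrable _ _),
    intervalIntegral.integral_comp_sub_left (fun x => ∫ t in (0:ℝ)..x, g t) R]
  simp; ring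

lemma ind_int {H : ℝ → ℝ} (hc : Continuous H) (r : ℝ) (a b : ℝ) :
    IntervalIntegrable (fun t => if r ≤ |t| then H t else 0) volume a b := by
  have hm : MeasurableSet {t : ℝ | r ≤ |t|} := measurableSet_le measurable_const measurable_norm
  have : (fun t => if r ≤ |t| then H t else 0) = Set.indicator {t : ℝ | r ≤ |t|} H := by
    ext t; simp [Set.indicator]
  rw [this, intervalIntegrable_iff]
  exact ((intervalIntegrable_iff.1 (hc.intervalIntegrable a b)).indicator hm)

lemma ind_diff {H : ℝ → ℝ} (hc : Continuous H) {r s x : ℝ} (hs : r ≤ s) (hs0 : 0 ≤ s) (hx : 0 ≤ x) :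
    |(∫ t in (0:ℝ)..x, if r ≤ |t| then H t else 0) - ∫ t in (0:ℝ)..x, H t| ≤
      ∫ t in (0:ℝ)..s, |H t| := by
  rw [← intervalIntegral.integral_sub (ind_int hc r _ _) (hc.intervalIntegrable _ _)]
  refine (intervalIntegral.abs_integral_le_integral_abs hx).trans ?_
  have hm : MeasurableSet (Set.Iic s) := measurableSet_Iic
  have hi : IntegrableOn (fun t => |H t|) (Set.Ioc 0 x) := by
    have := (hc.abs.intervalIntegrable (μ := volume) 0 x)
    rwa [intervalIntegrable_iff_integrableOn_Ioc_of_le hx] at this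
  have hi' : IntegrableOn (fun t => |H t|) (Set.Ioc 0 s) := by
    have := (hc.abs.intervalIntegrable (μ := volume) 0 s)
    rwa [intervalIntegrable_iff_integrableOn_Ioc_of_le hs0] at this
  calc _ ≤ ∫ t in (0:ℝ)..x, (Set.Iic s).indicator (fun t => |H t|) t := by
        apply intervalIntegral.integral_mono_on hx
        · exact ((ind_int hc r _ _).sub (hc.intervalIntegrable _ _)).abs
        · rw [intervalIntegrable_iff_integrableOn_Ioc_of_le hx]
          exact hi.indicator hm
        · intro t ht
          by_cases h1 : r ≤ |t|
          · simp [h1]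
            exact Set.indicator_nonneg (fun _ _ => abs_nonneg _) _
          · have : t ∈ Set.Iic s := by
              rw [abs_of_nonneg ht.1] at h1
              simp; linarith
            simp [h1, Set.indicator_of_mem this]
    _ = ∫ t in Set.Ioc 0 x ∩ Set.Iic s, |H t| := by
        rw [intervalIntegral.integral_of_le hx, setIntegral_indicator hm]
    _ ≤ _ := by
        rw [intervalIntegral.integral_of_le hs0]
        apply setIntegral_mono_set hi'
        · exact Eventually.of_forall fun _ => abs_nonneg _
        · refine (Eventually.of_forall fun t ht => ?_)
          exact ⟨ht.1.1, ht.2⟩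

lemma part1 {γ : ℝ} (hγ : γ < 1) {H : ℝ → ℝ} (hc : Continuous H) (heven : ∀ x, H (-x) = H x)
    (hasymp : Tendsto (fun x => H x / kk γ x) atTop (𝓝 1)) {r : ℝ → ℝ}
    (hro : Tendsto (fun R => Real.log (max (r R) 2) / Real.log R) atTop (𝓝 0)) :
    Tendsto (fun R => ((1 / (2 * R)) * ∫ x in (0:ℝ)..R, ∫ y in (0:ℝ)..R,
      (if r R ≤ |x - y| then H (x - y) else 0)) / LL γ R) atTop (𝓝 1) := by
  have h1 := M_ratio hγ hc hasymp (fun R => le_max_right (r R) 2) hro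
  have h2 := avg hγ hc hasymp
  have h3 : Tendsto (fun R => ((1 / (2 * R)) * ∫ x in (0:ℝ)..R, ∫ y in (0:ℝ)..R,
      (if r R ≤ |x - y| then H (x - y) else 0)) / LL γ R -
      (1 / R * ∫ x in (0:ℝ)..R, ∫ t in (0:ℝ)..x, H t) / LL γ R) atTop (𝓝 0) := by
    refine squeeze_zero_norm' ?_ h1
    filter_upwards [eventually_ge_atTop 2] with R hR
    have hL := LL_pos hγ hR
    have hR0 : 0 < R := by linarith
    have hg := ind_int hc (r R)
    have hI : Continuous fun x => ∫ t in (0:ℝ)..x, H t :=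
      intervalIntegral.continuous_primitive (fun a b => hc.intervalIntegrable a b) 0
    have hG := intervalIntegral.continuous_primitive hg 0
    have e := dbl hg (by intro x; simp [heven]) R
    rw [e, ← sub_div, norm_div, Real.norm_eq_abs, Real.norm_eq_abs, abs_of_pos hL]
    gcongr
    have e2 : ∀ A B : ℝ, 1 / (2 * R) * (2 * A) - 1 / R * B = 1 / R * (A - B) := by
      intro A B; field_simp
    rw [e2, ← intervalIntegral.integral_sub (hG.intervalIntegrable _ _) (hI.intervalIntegrable _ _),
      abs_mul, abs_of_pos (by positivity)]
    have := intervalIntegral.norm_integral_le_of_norm_le_const (a := 0) (b := R)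
      (C := ∫ t in (0:ℝ)..(max (r R) 2), |H t|)
      (f := fun x => (∫ t in (0:ℝ)..x, if r R ≤ |t| then H t else 0) - ∫ t in (0:ℝ)..x, H t)
      (by
        intro x hx
        rw [Set.uIoc_of_le hR0.le] at hx
        exact ind_diff hc (le_max_left _ _) (le_trans zero_le_two (le_max_right _ _)) hx.1.le)
    rw [sub_zero, abs_of_pos hR0, Real.norm_eq_abs] at this
    rw [one_div, inv_mul_le_iff₀ hR0, mul_comm R]
    exact this
  simpa using h3.add h2

lemma kk_anti (γ : ℝ) : ∃ X, 2 ≤ X ∧ ∀ x y, X ≤ x → x ≤ y → kk γ y ≤ kk γ x := by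
  rcases le_or_gt 0 γ with hg | hg
  · refine ⟨2, le_rfl, fun x y hx hxy => ?_⟩
    have h0 : 0 < Real.log x := Real.log_pos (by linarith)
    have h2 : Real.log x ≤ Real.log y := Real.log_le_log (by linarith) hxy
    have hx0 : 0 < x := by linarith
    unfold kk
    have := Real.rpow_le_rpow_of_nonpos h0 h2 (neg_nonpos.2 hg)
    have h3 : 0 ≤ Real.log y ^ (-γ) := Real.rpow_nonneg (by linarith) _
    gcongr
  · have hg' : 0 < -γ := by linarith
    refine ⟨max 2 (Real.exp ((1 / (-γ))⁻¹)), le_max_left _ _, fun x y hx hxy => ?_⟩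
    have hx2 : 2 ≤ x := (le_max_left _ _).trans hx
    have hxe : Real.exp ((1 / (-γ))⁻¹) ≤ x := (le_max_right _ _).trans hx
    have := Real.log_div_self_rpow_antitoneOn (a := 1 / (-γ)) (by positivity)
      (show x ∈ {x | _} from hxe) (show y ∈ {x | _} from hxe.trans hxy) hxy
    have e : ∀ z : ℝ, 2 ≤ z → kk γ z = (Real.log z / z ^ (1 / (-γ))) ^ (-γ) := by
      intro z hz
      have h0 : 0 < Real.log z := Real.log_pos (by linarith)
      have hz0 : 0 < z := by linarith
      rw [Real.div_rpow h0.le (by positivity), ← Real.rpow_mul hz0.le, one_div,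
        inv_mul_cancel₀ hg'.ne', Real.rpow_one]
      unfold kk
      rw [inv_mul_eq_div]
    rw [e x hx2, e y (hx2.trans hxy)]
    have h0 : 0 < Real.log y := Real.log_pos (by linarith)
    have hy0 : 0 < y := by linarith
    exact Real.rpow_le_rpow (by positivity) this hg'.le

lemma J_lower {γ : ℝ} (hγ : γ < 1) {H : ℝ → ℝ} (hc : Continuous H)
    (hasymp : Tendsto (fun x => H x / kk γ x) atTop (𝓝 1)) {ε : ℝ} (hε : 0 < ε) (hε1 : ε < 1) :
    ∃ x0 B, 2 ≤ x0 ∧ ∀ R s z, x0 ≤ R → 2 ≤ s → 0 ≤ z → z ≤ s →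
      -B + (1 - ε) * (LL γ R - LL γ (x0 * s)) ≤ ∫ x in (0:ℝ)..R, H (Real.sqrt (x ^ 2 + z ^ 2)) := by
  obtain ⟨X, hX2, hX⟩ := kk_anti γ
  obtain ⟨x0, hx0⟩ := eventually_atTop.1 ((ev_close hasymp hε).and (eventually_ge_atTop X))
  have h20 : 2 ≤ x0 := hX2.trans (hx0 x0 le_rfl).2
  have hHk : ∀ x, x0 ≤ x → (1 - ε) * kk γ x ≤ H x := by
    intro x hx
    have := (abs_le.1 (hx0 x hx).1).1
    linarith
  obtain ⟨B, hB⟩ := (isCompact_Icc (a := (0:ℝ)) (b := x0)).exists_bound_of_continuousOn hc.continuousOn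
  have hB0 : 0 ≤ B := (norm_nonneg _).trans (hB 0 ⟨le_rfl, by linarith⟩)
  have hHB : ∀ x, 0 ≤ x → -B ≤ H x := by
    intro x hx
    rcases le_total x x0 with h | h
    · have := hB x ⟨hx, h⟩
      exact (abs_le.1 this).1
    · have := hHk x h
      have := mul_pos (sub_pos.2 hε1) (kk_pos γ (h20.trans h))
      linarith
  refine ⟨x0, B * x0, h20, fun R s z hR hs hz hzs => ?_⟩
  have hJc : Continuous fun x => H (Real.sqrt (x ^ 2 + z ^ 2)) := hc.comp (by fun_prop)
  rw [← intervalIntegral.integral_add_adjacent_intervals (b := x0)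
    (hJc.intervalIntegrable _ _) (hJc.intervalIntegrable _ _)]
  have h1 : -(B * x0) ≤ ∫ x in (0:ℝ)..x0, H (Real.sqrt (x ^ 2 + z ^ 2)) := by
    have := intervalIntegral.integral_mono_on (μ := volume) (a := 0) (b := x0) (f := fun _ => -B) (by linarith)
      (by simp) (hJc.intervalIntegrable _ _) (fun x _ => hHB _ (Real.sqrt_nonneg _))
    simp at this
    linarith
  have hki : IntervalIntegrable (fun x => kk γ (x + s)) volume x0 R := by
    have := (kk_int γ (p := x0 + s) (q := R + s) (by linarith) (by linarith)).comp_add_right s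
    simpa using this
  have h2 : ∫ x in (x0)..R, (1 - ε) * kk γ (x + s) ≤ ∫ x in (x0)..R, H (Real.sqrt (x ^ 2 + z ^ 2)) := by
    apply intervalIntegral.integral_mono_on hR (hki.const_mul _) (hJc.intervalIntegrable _ _)
    intro x hx
    have hx0' : 0 ≤ x := by linarith [hx.1]
    have hxs : x ≤ Real.sqrt (x ^ 2 + z ^ 2) := Real.le_sqrt_of_sq_le (by nlinarith)
    have hsx : Real.sqrt (x ^ 2 + z ^ 2) ≤ x + s := by
      rw [Real.sqrt_le_left (by linarith)]
      nlinarith [mul_nonneg hx0' hz]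
    refine le_trans ?_ (hHk _ (hx.1.trans hxs))
    have := hX _ _ ((hx0 x0 le_rfl).2.trans (hx.1.trans hxs)) hsx
    have : 0 < 1 - ε := by linarith
    gcongr
  rw [intervalIntegral.integral_const_mul, intervalIntegral.integral_comp_add_right (fun x => kk γ x),
    kk_integral hγ (by linarith) (by linarith)] at h2
  have h3 : LL γ R ≤ LL γ (R + s) := LL_mono hγ (by linarith) (by linarith)
  have h4 : LL γ (x0 + s) ≤ LL γ (x0 * s) := LL_mono hγ (by linarith) (by nlinarith)
  have : (1 - ε) * (LL γ R - LL γ (x0 * s)) ≤ (1 - ε) * (LL γ (R + s) - LL γ (x0 + s)) := by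
    have : 0 < 1 - ε := by linarith
    gcongr
  linarith

lemma part2 {γ : ℝ} (hγ : γ < 1) {H : ℝ → ℝ} (hc : Continuous H) (heven : ∀ x, H |x| = H x)
    (hasymp : Tendsto (fun x => H x / kk γ x) atTop (𝓝 1)) {r : ℝ → ℝ} (hr0 : ∀ R, 0 ≤ r R)
    (hro : Tendsto (fun R => Real.log (max (r R) 2) / Real.log R) atTop (𝓝 0)) :
    Tendsto (fun R => (sInf ((fun z => ∫ x in (0:ℝ)..R, H (Real.sqrt (x ^ 2 + z ^ 2))) ''
            Set.Icc 0 (r R))) / (∫ x in (0:ℝ)..R, H x)) atTop (𝓝 1) := by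
  have hLne : ∀ᶠ R in atTop, LL γ R ≠ 0 := by
    filter_upwards [eventually_ge_atTop 2] with R hR using (LL_pos hγ hR).ne'
  have hequiv := int_equiv hγ hc hasymp
  have hItop : Tendsto (fun R => ∫ x in (0:ℝ)..R, H x) atTop atTop :=
    hequiv.symm.tendsto_atTop (LL_tendsto hγ)
  have hLI : Tendsto (fun R => LL γ R / ∫ x in (0:ℝ)..R, H x) atTop (𝓝 1) := by
    have := hequiv.symm
    rwa [isEquivalent_iff_tendsto_one (hItop.eventually_ne_atTop 0)] at this
  have low : ∀ ε : ℝ, 0 < ε → ε < 1 → ∀ᶠ R in atTop, ∀ z ∈ Set.Icc 0 (r R),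
      (1 - 2 * ε) * (∫ x in (0:ℝ)..R, H x) ≤ ∫ x in (0:ℝ)..R, H (Real.sqrt (x ^ 2 + z ^ 2)) := by
    intro ε hε hε1
    obtain ⟨x0, B, h20, hJ⟩ := J_lower hγ hc hasymp hε hε1
    have hs : ∀ R, 2 ≤ x0 * max (r R) 2 := fun R => by nlinarith [le_max_right (r R) 2]
    have hlog : Tendsto (fun R => Real.log (x0 * max (r R) 2) / Real.log R) atTop (𝓝 0) := by
      have := (Tendsto.const_div_atTop Real.tendsto_log_atTop (Real.log x0)).add hro
      rw [add_zero] at this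
      refine this.congr fun R => ?_
      have : 0 < max (r R) 2 := by positivity
      rw [Real.log_mul (by linarith) this.ne', add_div]
    have hz := LL_ratio_zero hγ hs hlog
    have hlim : Tendsto (fun R => -B / (∫ x in (0:ℝ)..R, H x) + (1 - ε) *
        ((1 - LL γ (x0 * max (r R) 2) / LL γ R) * (LL γ R / ∫ x in (0:ℝ)..R, H x))) atTop
        (𝓝 (0 + (1 - ε) * ((1 - 0) * 1))) :=
      (Tendsto.const_div_atTop hItop _).add (((tendsto_const_nhds.sub hz).mul hLI).const_mul _)
    have hev := hlim.eventually (eventually_gt_nhds (show 1 - 2 * ε < _ by linarith))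
    filter_upwards [hev, hLne, hItop.eventually_gt_atTop 0, eventually_ge_atTop x0] with R h1 h2 h3 h4 z hz
    refine le_trans ?_ (hJ R (max (r R) 2) z h4 (le_max_right _ _) hz.1 (hz.2.trans (le_max_left _ _)))
    rw [← le_div_iff₀ h3]
    refine h1.le.trans (le_of_eq ?_)
    field_simp
  rw [tendsto_order]
  constructor
  · intro a ha
    set ε := min ((1 - a) / 4) (1 / 2) with hεd
    have hε : 0 < ε := by apply lt_min <;> linarith
    have hε1 : ε < 1 := (min_le_right _ _).trans_lt (by norm_num)
    have hεa : ε ≤ (1 - a) / 4 := min_le_left _ _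
    filter_upwards [low ε hε hε1, hItop.eventually_gt_atTop 0] with R h1 h3
    refine lt_of_lt_of_le (show a < 1 - 2 * ε by linarith) ?_
    rw [le_div_iff₀ h3]
    apply le_csInf ((Set.nonempty_Icc.2 (hr0 R)).image _)
    rintro _ ⟨z, hz, rfl⟩
    exact h1 z hz
  · intro a ha
    filter_upwards [low (1 / 2) (by norm_num) (by norm_num), hItop.eventually_gt_atTop 0] with R h1 h3
    refine lt_of_le_of_lt ?_ ha
    rw [div_le_one h3]
    refine (csInf_le ?_ (Set.mem_image_of_mem _ (show (0:ℝ) ∈ Set.Icc 0 (r R) from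
      ⟨le_rfl, hr0 R⟩))).trans (le_of_eq ?_)
    · refine ⟨(1 - 2 * (1 / 2)) * (∫ x in (0:ℝ)..R, H x), ?_⟩
      rintro _ ⟨z, hz, rfl⟩
      exact h1 z hz
    · congr 1
      ext x
      simp [Real.sqrt_sq_eq_abs, heven]

end S3

/-- let `γ < 1`, let `h : [0,∞) → ℝ` be continuous with
`h(x) ∼ x⁻¹ (log x)^(-γ)` as `x → ∞`, and let `r : (0,∞) → [0,∞)` satisfy `r(R) = R^{o(1)}`
(i.e. `log(max(r R, 2)) / log R → 0`). Then, as `R → ∞`,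
`(1/(2R)) ∫₀^R ∫₀^R h(|x-y|) 1_{|x-y| ≥ r R} dx dy ∼ ∫₀^R h(x) dx` and
`min_{z ∈ [0, r R]} ∫₀^R h(√(x² + z²)) dx ∼ ∫₀^R h(x) dx`. -/
theorem statement3 (γ : ℝ) (hγ : γ < 1) (h : ℝ → ℝ)
    (hcont : ContinuousOn h (Set.Ici 0))
    (hasymp : Tendsto (fun x => h x / (x⁻¹ * Real.log x ^ (-γ))) atTop (nhds 1))
    (r : ℝ → ℝ) (hr0 : ∀ R : ℝ, 0 ≤ r R)
    (hro : Tendsto (fun R => Real.log (max (r R) 2) / Real.log R) atTop (nhds 0)) :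
    Tendsto (fun R =>
        ((1 / (2 * R)) * ∫ x in (0:ℝ)..R, ∫ y in (0:ℝ)..R,
            (if r R ≤ |x - y| then h |x - y| else 0)) /
          (∫ x in (0:ℝ)..R, h x)) atTop (nhds 1)
    ∧ Tendsto (fun R =>
        (sInf ((fun z => ∫ x in (0:ℝ)..R, h (Real.sqrt (x ^ 2 + z ^ 2))) ''
            Set.Icc 0 (r R))) /
          (∫ x in (0:ℝ)..R, h x)) atTop (nhds 1) := by
  have hc : Continuous fun x : ℝ => h |x| :=
    hcont.comp_continuous continuous_abs (fun x => abs_nonneg x)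
  have has : Tendsto (fun x => (fun x : ℝ => h |x|) x / S3.kk γ x) atTop (nhds 1) := by
    refine hasymp.congr' ?_
    filter_upwards [eventually_ge_atTop 0] with x hx
    simp [S3.kk, abs_of_nonneg hx]
  have hequiv := S3.int_equiv hγ hc has
  have hIe : ∀ᶠ R in atTop, ∫ x in (0:ℝ)..R, h |x| = ∫ x in (0:ℝ)..R, h x := by
    filter_upwards [eventually_ge_atTop 0] with R hR
    apply intervalIntegral.integral_congr
    intro x hx
    rw [Set.uIcc_of_le hR] at hx
    simp [abs_of_nonneg hx.1]
  have hLne : ∀ᶠ R in atTop, S3.LL γ R ≠ 0 := by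
    filter_upwards [eventually_ge_atTop 2] with R hR using (S3.LL_pos hγ hR).ne'
  have hIL := (Asymptotics.isEquivalent_iff_tendsto_one hLne).1 hequiv
  constructor
  · have h1 := S3.part1 hγ hc (by intro x; simp) has hro
    have h2 := h1.div hIL one_ne_zero
    rw [div_one] at h2
    refine h2.congr' ?_
    filter_upwards [hIe, hLne] with R h3 h4
    simp only [Pi.div_apply, h3]
    rw [div_div_div_cancel_right₀ h4]
  · have h1 := S3.part2 hγ hc (by intro x; simp) has hr0 hro
    refine h1.congr' ?_
    filter_upwards [hIe] with R h3
    simp only [h3, abs_of_nonneg (Real.sqrt_nonneg _)]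
end

section
/- Let d ≥ 1 and let h : ℝ^d → ℝ be continuous, isotropic, positive definite, and such that its radial profile is regularly varying (at infinity) with index α ∈ [0, d). Then there exist continuous, isotropic, positive definite functions h₁, h₂ : ℝ^d → ℝ such that h = h₁ + h₂, h₁(x) ≥ 0 for all x ∈ ℝ^d, and h₁(x)/h(x) → 1 as |x| → ∞. -/
open Filter

/-- A kernel `K : ℝ^d → ℝ` is positive definite if all quadratic forms
`∑ i j, c i * c j * K (x i - x j)` are nonnegative. -/
def IsPosDefKernel {d : ℕ} (K : EuclideanSpace ℝ (Fin d) → ℝ) : Prop :=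
  ∀ (n : ℕ) (x : Fin n → EuclideanSpace ℝ (Fin d)) (c : Fin n → ℝ),
    0 ≤ ∑ i : Fin n, ∑ j : Fin n, c i * c j * K (x i - x j)

/-- A kernel is isotropic if it only depends on the Euclidean norm. -/
def IsIsotropic {d : ℕ} (K : EuclideanSpace ℝ (Fin d) → ℝ) : Prop :=
  ∀ x y : EuclideanSpace ℝ (Fin d), ‖x‖ = ‖y‖ → K x = K y

open MeasureTheory Set Topology

lemma uct_near {F : ℝ → ℝ} (hF : Continuous F)
    (hv : ∀ u, Tendsto (fun t => F (t + u) - F t) atTop (𝓝 0)) {ε : ℝ} (hε : 0 < ε) :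
    ∃ δ > 0, ∃ T, ∀ t, T ≤ t → ∀ u, |u| ≤ δ → |F (t + u) - F t| ≤ ε := by
  let A : ℕ → Set ℝ := fun n => {u | ∀ t : ℝ, (n : ℝ) ≤ t → |F (t + u) - F t| ≤ ε / 2}
  have hc : ∀ n, IsClosed (A n) := by
    intro n
    have : A n = ⋂ t : ℝ, ⋂ (_ : (n : ℝ) ≤ t), {u | |F (t + u) - F t| ≤ ε / 2} := by
      ext u; simp [A]
    rw [this]
    refine isClosed_iInter fun t => isClosed_iInter fun _ => ?_
    exact isClosed_le (by fun_prop) continuous_const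
  have hU : ⋃ n, A n = univ := by
    refine eq_univ_of_forall fun u => ?_
    have h1 := (hv u).abs.eventually (gt_mem_nhds (show |(0 : ℝ)| < ε / 2 by simpa using hε))
    obtain ⟨T, hT⟩ := eventually_atTop.1 h1
    obtain ⟨n, hn⟩ := exists_nat_ge T
    exact mem_iUnion.2 ⟨n, fun t ht => (hT t (hn.trans ht)).le⟩
  obtain ⟨n, c, hcn⟩ := nonempty_interior_of_iUnion_of_closed hc hU
  obtain ⟨δ, hδ, hball⟩ := Metric.mem_nhds_iff.1 (mem_interior_iff_mem_nhds.1 hcn)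
  refine ⟨δ / 2, by positivity, n + c, fun t ht u hu => ?_⟩
  have h1 : c + u ∈ A n := hball (by
    rw [Metric.mem_ball, Real.dist_eq]
    have : c + u - c = u := by ring
    rw [this]; linarith)
  have h2 : c ∈ A n := hball (Metric.mem_ball_self hδ)
  have h3 := h1 (t - c) (by linarith)
  have h4 := h2 (t - c) (by linarith)
  rw [show t - c + (c + u) = t + u by ring] at h3
  rw [show t - c + c = t by ring] at h4
  rw [abs_le] at *
  constructor <;> linarith [h3.1, h3.2, h4.1, h4.2]

lemma uct_bdd {F : ℝ → ℝ} (hF : Continuous F)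
    (hv : ∀ u, Tendsto (fun t => F (t + u) - F t) atTop (𝓝 0)) :
    ∃ N T, ∀ t, T ≤ t → ∀ u, |u| ≤ 1 → |F (t + u) - F t| ≤ N := by
  obtain ⟨δ, hδ, T, hT⟩ := uct_near hF hv one_pos
  have key : ∀ n : ℕ, ∃ S, ∀ t, S ≤ t → ∀ u, |u| ≤ n * δ → |F (t + u) - F t| ≤ n := by
    intro n
    induction n with
    | zero =>
      refine ⟨0, fun t _ u hu => ?_⟩
      have : u = 0 := by simpa using hu
      simp [this]
    | succ n ih =>
      obtain ⟨S, hS⟩ := ih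
      refine ⟨max S (T + n * δ), fun t ht u hu => ?_⟩
      have hn : (0 : ℝ) < (n : ℝ) + 1 := by positivity
      push_cast at hu ⊢
      have e1 : |u / (n + 1)| ≤ δ := by
        rw [abs_div, abs_of_pos hn, div_le_iff₀ hn]; linarith
      have e2 : |n * (u / (n + 1))| ≤ n * δ := by
        rw [abs_mul, abs_of_nonneg (Nat.cast_nonneg n)]
        exact mul_le_mul_of_nonneg_left e1 (Nat.cast_nonneg n)
      have a1 := hS t ((le_max_left _ _).trans ht) _ e2
      have a2 := hT (t + n * (u / (n + 1)))
        (by linarith [(abs_le.1 e2).1, (le_max_right S (T + n * δ)).trans ht]) _ e1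
      have e3 : t + n * (u / (n + 1)) + u / (n + 1) = t + u := by field_simp; ring
      rw [e3] at a2
      rw [abs_le] at *
      constructor <;> linarith [a1.1, a1.2, a2.1, a2.2]
  obtain ⟨n, hn⟩ := exists_nat_ge (1 / δ)
  obtain ⟨S, hS⟩ := key n
  refine ⟨n, S, fun t ht u hu => hS t ht u (hu.trans ?_)⟩
  rwa [div_le_iff₀ hδ] at hn

lemma potter {F : ℝ → ℝ} (hF : Continuous F)
    (hv : ∀ u, Tendsto (fun t => F (t + u) - F t) atTop (𝓝 0)) {ε : ℝ} (hε : 0 < ε) :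
    ∃ C T, ∀ t, T ≤ t → C - ε * t ≤ F t := by
  have h1 := (hv 1).eventually (lt_mem_nhds (show -ε < 0 by linarith))
  obtain ⟨T, hT⟩ := eventually_atTop.1 h1
  obtain ⟨m, hm⟩ := (isCompact_Icc (a := T) (b := T + 1)).bddBelow_image hF.continuousOn
  have hm' : ∀ t ∈ Icc T (T + 1), m ≤ F t := fun t ht => hm (mem_image_of_mem _ ht)
  have key : ∀ n : ℕ, ∀ t, T + n ≤ t → t ≤ T + n + 1 → m - ε * n ≤ F t := by
    intro n
    induction n with
    | zero => intro t h1 h2; simpa using hm' t ⟨by simpa using h1, by simpa using h2⟩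
    | succ n ih =>
      intro t h1 h2
      push_cast at *
      have a := ih (t - 1) (by linarith) (by linarith)
      have b := hT (t - 1) (by linarith [(Nat.cast_nonneg n : (0 : ℝ) ≤ n)])
      rw [sub_add_cancel] at b
      linarith
  refine ⟨m + ε * T, T, fun t ht => ?_⟩
  have a := key ⌊t - T⌋₊ t (by linarith [Nat.floor_le (sub_nonneg.2 ht)])
    (by linarith [Nat.lt_floor_add_one (t - T)])
  have b := mul_le_mul_of_nonneg_left (Nat.floor_le (sub_nonneg.2 ht)) hε.le
  linarith

lemma rv_facts {k : ℝ → ℝ} {α : ℝ} (d : ℕ) (hαd : α < d) (hrv : RegularlyVarying k α) :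
    (∃ c > 0, ∃ M ≥ 1, ∀ r, M ≤ r → c ≤ k r * r ^ d) ∧
    (∃ B R, 1 ≤ R ∧ ∀ r, R ≤ r → 0 < k r ∧ ∀ s, r / 2 ≤ s → s ≤ 2 * r → |k s| ≤ B * k r) ∧
    (∀ ε > 0, ∃ δ > 0, ∃ R, ∀ r, R ≤ r → ∀ s, |s / r - 1| < δ → |k s / k r - 1| ≤ ε) := by
  obtain ⟨hkc, L, ⟨hLc, hLp, hLv⟩, hkL⟩ := hrv
  -- eventual positivity
  obtain ⟨R0, hR0⟩ := eventually_atTop.1 (hkL.eventually (lt_mem_nhds one_pos))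
  set R1 := max R0 1 with hR1
  have hR1p : 0 < R1 := lt_of_lt_of_le one_pos (le_max_right _ _)
  have hkp : ∀ r, R1 ≤ r → 0 < k r := by
    intro r hr
    have h0 : 0 < r := hR1p.trans_le hr
    have := hR0 r ((le_max_left _ _).trans hr)
    have h2 : 0 < r ^ (-α) * L r := mul_pos (Real.rpow_pos_of_pos h0 _) (hLp r h0)
    exact (div_pos_iff_of_pos_right h2).1 this
  have hratio : ∀ a, 0 < a → Tendsto (fun x => k (a * x) / k x) atTop (𝓝 (a ^ (-α))) := by
    intro a ha
    have h1 : Tendsto (fun x : ℝ => a * x) atTop atTop := tendsto_id.const_mul_atTop ha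
    have h2 := ((hkL.comp h1).div hkL one_ne_zero).mul ((hLv a ha).const_mul (a ^ (-α)))
    simp only [div_one, mul_one, one_mul] at h2
    refine h2.congr' ?_
    filter_upwards [eventually_ge_atTop R1, eventually_gt_atTop 0] with x hx hx0
    have p1 := hkp x hx
    have p2 := hLp x hx0
    have p3 := hLp _ (mul_pos ha hx0)
    have p4 := Real.rpow_pos_of_pos hx0 (-α)
    have p5 := Real.rpow_pos_of_pos ha (-α)
    simp only [Function.comp, Pi.div_apply]
    rw [Real.mul_rpow ha.le hx0.le]
    field_simp
  let F : ℝ → ℝ := fun t => Real.log (k (Real.exp (max t (Real.log R1)))) + α * t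
  have hge : ∀ t, R1 ≤ Real.exp (max t (Real.log R1)) := fun t => by
    rw [← Real.log_le_iff_le_exp hR1p]; exact le_max_right _ _
  have hF : Continuous F := by
    refine Continuous.add (Continuous.log ?_ fun t => (hkp _ (hge t)).ne') (by fun_prop)
    exact hkc.comp_continuous (by fun_prop) (fun t => Real.exp_pos _)
  have hFeq : ∀ r, R1 ≤ r → F (Real.log r) = Real.log (k r) + α * Real.log r := by
    intro r hr
    have h0 : 0 < r := hR1p.trans_le hr
    simp only [F]
    rw [max_eq_left (Real.log_le_log hR1p hr), Real.exp_log h0]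
  have hv : ∀ u, Tendsto (fun t => F (t + u) - F t) atTop (𝓝 0) := by
    intro u
    have h1 := (hratio (Real.exp u) (Real.exp_pos u)).comp Real.tendsto_exp_atTop
    have h2 := (h1.log (Real.rpow_pos_of_pos (Real.exp_pos u) _).ne').add_const (α * u)
    rw [Real.log_rpow (Real.exp_pos u), Real.log_exp, show -α * u + α * u = 0 by ring] at h2
    refine h2.congr' ?_
    filter_upwards [eventually_ge_atTop (Real.log R1), eventually_ge_atTop (Real.log R1 - u)]
      with t ht1 ht2
    have q1 : R1 ≤ Real.exp t := by rwa [← Real.log_le_iff_le_exp hR1p]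
    have q2 : R1 ≤ Real.exp (t + u) := by rw [← Real.log_le_iff_le_exp hR1p]; linarith
    simp only [Function.comp, F]
    rw [max_eq_left ht1, max_eq_left (by linarith : Real.log R1 ≤ t + u), ← Real.exp_add,
      add_comm u t, Real.log_div (hkp _ q2).ne' (hkp _ q1).ne']
    ring
  -- ratio formula
  have hrat : ∀ r s, R1 ≤ r → R1 ≤ s → k s / k r =
      Real.exp (F (Real.log r + Real.log (s / r)) - F (Real.log r) - α * Real.log (s / r)) := by
    intro r s hr hs
    have h0 : 0 < r := hR1p.trans_le hr
    have h0' : 0 < s := hR1p.trans_le hs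
    have : Real.log r + Real.log (s / r) = Real.log s := by
      rw [Real.log_div h0'.ne' h0.ne']; ring
    rw [this, hFeq r hr, hFeq s hs, Real.log_div h0'.ne' h0.ne',
      ← Real.exp_log (div_pos (hkp s hs) (hkp r hr)), Real.log_div (hkp s hs).ne' (hkp r hr).ne']
    congr 1; ring
  refine ⟨?_, ?_, ?_⟩
  · obtain ⟨C, T, hT⟩ := potter hF hv (sub_pos.2 hαd)
    refine ⟨Real.exp C, Real.exp_pos _, max R1 (Real.exp T), (le_max_right _ _).trans (le_max_left _ _),
      fun r hr => ?_⟩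
    have hr1 : R1 ≤ r := (le_max_left _ _).trans hr
    have h0 : 0 < r := hR1p.trans_le hr1
    have := hT (Real.log r) (by rw [Real.le_log_iff_exp_le h0]; exact (le_max_right _ _).trans hr)
    rw [hFeq r hr1] at this
    rw [← Real.le_log_iff_exp_le (mul_pos (hkp r hr1) (pow_pos h0 d)),
      Real.log_mul (hkp r hr1).ne' (pow_pos h0 d).ne', Real.log_pow]
    linarith
  · obtain ⟨N, T, hT⟩ := uct_bdd hF hv
    refine ⟨Real.exp (N + |α|), max (2 * R1) (Real.exp T), ?_, fun r hr => ?_⟩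
    · have := le_max_right R0 1
      exact le_trans (by linarith) (le_max_left _ _)
    have hr1 : 2 * R1 ≤ r := (le_max_left _ _).trans hr
    have hr2 : R1 ≤ r := by linarith
    have h0 : 0 < r := hR1p.trans_le hr2
    refine ⟨hkp r hr2, fun s hs1 hs2 => ?_⟩
    have hs : R1 ≤ s := by linarith
    have hs0 : 0 < s := hR1p.trans_le hs
    rw [abs_of_pos (hkp s hs), ← div_le_iff₀ (hkp r hr2), hrat r s hr2 hs, Real.exp_le_exp]
    have hl2 := Real.log_two_lt_d9
    have hu : |Real.log (s / r)| ≤ 1 := by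
      rw [abs_le]
      constructor
      · have : Real.log (1 / 2) ≤ Real.log (s / r) :=
          Real.log_le_log (by norm_num) (by rw [le_div_iff₀ h0]; linarith)
        rw [one_div, Real.log_inv] at this
        linarith
      · have : Real.log (s / r) ≤ Real.log 2 :=
          Real.log_le_log (div_pos hs0 h0) (by rw [div_le_iff₀ h0]; linarith)
        linarith
    have h1 := hT (Real.log r)
      (by rw [Real.le_log_iff_exp_le h0]; exact (le_max_right _ _).trans hr) _ hu
    have h2 : |α * Real.log (s / r)| ≤ |α| := by
      rw [abs_mul]; exact mul_le_of_le_one_right (abs_nonneg _) hu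
    linarith [(abs_le.1 h1).2, (abs_le.1 h2).1]
  · intro ε hε
    -- continuity of exp at zero
    obtain ⟨η, hη, hexp⟩ := Metric.continuousAt_iff.1 (Real.continuous_exp.continuousAt (x := 0)) ε hε
    obtain ⟨δ, hδ, T, hT⟩ := uct_near hF hv (show 0 < η / 4 by positivity)
    set δ' := min δ (η / (4 * (|α| + 1))) with hδ'
    have hα1 : 0 < |α| + 1 := by positivity
    have hδ'p : 0 < δ' := lt_min hδ (by positivity)
    obtain ⟨ρ, hρ, hlog⟩ := Metric.continuousAt_iff.1
      (Real.continuousAt_log (one_ne_zero)) δ' hδ'p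
    refine ⟨min ρ (1 / 2), by positivity, max (2 * R1) (Real.exp T), fun r hr s hs => ?_⟩
    have hr1 : 2 * R1 ≤ r := (le_max_left _ _).trans hr
    have hr2 : R1 ≤ r := by linarith
    have h0 : 0 < r := hR1p.trans_le hr2
    have hs1 := abs_lt.1 (hs.trans_le (min_le_right _ _))
    have hs2 : R1 ≤ s := by
      have : 1 / 2 < s / r := by linarith [hs1.1]
      rw [lt_div_iff₀ h0] at this
      linarith
    have hl : |Real.log (s / r)| < δ' := by
      have := hlog (x := s / r) (by rw [Real.dist_eq]; exact hs.trans_le (min_le_left _ _))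
      rwa [Real.dist_eq, Real.log_one, sub_zero] at this
    have h1 := hT (Real.log r)
      (by rw [Real.le_log_iff_exp_le h0]; exact (le_max_right _ _).trans hr) _
      (hl.le.trans (min_le_left _ _))
    have h2 : |α * Real.log (s / r)| ≤ η / 4 := by
      rw [abs_mul]
      calc |α| * |Real.log (s / r)| ≤ (|α| + 1) * (η / (4 * (|α| + 1))) :=
            mul_le_mul (by linarith) (hl.le.trans (min_le_right _ _)) (abs_nonneg _) hα1.le
        _ = η / 4 := by field_simp
    rw [hrat r s hr2 hs2]
    set X := F (Real.log r + Real.log (s / r)) - F (Real.log r) - α * Real.log (s / r)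
    have h3 : |X| < η := by
      rw [abs_lt]
      constructor <;> simp only [X] <;> linarith [(abs_le.1 h1).1, (abs_le.1 h1).2, (abs_le.1 h2).1, (abs_le.1 h2).2]
    have := hexp (x := X) (by rw [Real.dist_eq, sub_zero]; exact h3)
    rw [Real.dist_eq, Real.exp_zero] at this
    exact this.le

section posdef
variable {d : ℕ}

lemma IsPosDefKernel.fintype {K : EuclideanSpace ℝ (Fin d) → ℝ} (hK : IsPosDefKernel K)
    {ι : Type*} [Fintype ι] (x : ι → EuclideanSpace ℝ (Fin d)) (c : ι → ℝ) :
    0 ≤ ∑ i, ∑ j, c i * c j * K (x i - x j) := by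
  let e := (Fintype.equivFin ι).symm
  have := hK (Fintype.card ι) (fun i => x (e i)) (fun i => c (e i))
  rw [← e.sum_comp]
  simp_rw [← e.sum_comp (fun j => c (e _) * c j * K (x (e _) - x j))]
  exact this

lemma IsPosDefKernel.quad {K : EuclideanSpace ℝ (Fin d) → ℝ} (hK : IsPosDefKernel K)
    {n : ℕ} (x : Fin n → EuclideanSpace ℝ (Fin d)) (c : Fin n → ℝ) :
    IsPosDefKernel (fun y => ∑ i, ∑ j, c i * c j * K (x i - x j + y)) := by
  intro m y e
  have := hK.fintype (ι := Fin m × Fin n) (fun p => x p.2 + y p.1) (fun p => e p.1 * c p.2)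
  refine this.trans_eq ?_
  simp_rw [Fintype.sum_prod_type, Finset.mul_sum]
  refine Finset.sum_congr rfl fun a _ => ?_
  rw [Finset.sum_comm]
  refine Finset.sum_congr rfl fun b _ => ?_
  refine Finset.sum_congr rfl fun i _ => Finset.sum_congr rfl fun j _ => ?_
  rw [show x i + y a - (x j + y b) = x i - x j + (y a - y b) by abel]
  ring

/-- The inequality `F y + F (-y) ≤ 2 F 0`, and its mirror image. -/
lemma IsPosDefKernel.two {K : EuclideanSpace ℝ (Fin d) → ℝ} (hK : IsPosDefKernel K)
    (y : EuclideanSpace ℝ (Fin d)) :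
    K y + K (-y) ≤ 2 * K 0 ∧ -(2 * K 0) ≤ K y + K (-y) := by
  have h1 := hK 2 ![0, y] ![1, -1]
  have h2 := hK 2 ![0, y] ![1, 1]
  simp [Fin.sum_univ_two] at h1 h2
  constructor <;> linarith

lemma IsPosDefKernel.integral_nonneg {F : EuclideanSpace ℝ (Fin d) → ℝ} (hF : IsPosDefKernel F)
    (hc : Continuous F) {B : ℝ} (hB : ∀ x, |F x| ≤ B)
    (ν : Measure (EuclideanSpace ℝ (Fin d))) [IsProbabilityMeasure ν] :
    0 ≤ ∫ p, F (p.1 - p.2) ∂(ν.prod ν) := by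
  set I := ∫ p, F (p.1 - p.2) ∂(ν.prod ν) with hI
  have key : ∀ n : ℕ, 0 ≤ F 0 + n * I := by
    intro n
    let P : Measure (Fin (n + 1) → EuclideanSpace ℝ (Fin d)) := Measure.pi fun _ => ν
    have hintg : ∀ i j, Integrable (fun ω : Fin (n + 1) → EuclideanSpace ℝ (Fin d) =>
        F (ω i - ω j)) P := by
      intro i j
      refine Integrable.of_bound (C := B) ?_ (Eventually.of_forall fun ω => hB _)
      exact (by fun_prop : Continuous fun ω : Fin (n + 1) → EuclideanSpace ℝ (Fin d) =>
        F (ω i - ω j)).aestronglyMeasurable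
    have h0 : 0 ≤ ∫ ω, ∑ i, ∑ j, F (ω i - ω j) ∂P := by
      refine MeasureTheory.integral_nonneg fun ω => ?_
      have := hF (n + 1) ω (fun _ => 1)
      simpa using this
    rw [integral_finsetSum _ (fun i _ => integrable_finsetSum _ fun j _ => hintg i j)] at h0
    simp_rw [integral_finsetSum _ (fun j _ => hintg _ j)] at h0
    have hval : ∀ i j, ∫ ω, F (ω i - ω j) ∂P = if i = j then F 0 else I := by
      intro i j
      split_ifs with hij
      · subst hij; simp
      · have hind := (ProbabilityTheory.iIndepFun_pi (μ := fun _ : Fin (n + 1) => ν)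
          (X := fun _ => id) (fun i => aemeasurable_id)).indepFun hij
        have hmap := (ProbabilityTheory.indepFun_iff_map_prod_eq_prod_map_map
          (measurable_pi_apply i).aemeasurable (measurable_pi_apply j).aemeasurable).1 hind
        rw [(measurePreserving_eval (fun _ : Fin (n + 1) => ν) i).map_eq,
          (measurePreserving_eval (fun _ : Fin (n + 1) => ν) j).map_eq] at hmap
        rw [hI, ← hmap, integral_map (by fun_prop)]
        exact (by fun_prop : Continuous fun p : EuclideanSpace ℝ (Fin d) ×
          EuclideanSpace ℝ (Fin d) => F (p.1 - p.2)).aestronglyMeasurable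
    simp_rw [hval] at h0
    have hs : ∀ i : Fin (n + 1), ∑ j, (if i = j then F 0 else I) = F 0 + n * I := by
      intro i
      have : ∀ j, (if i = j then F 0 else I) = (if i = j then F 0 - I else 0) + I := by
        intro j; split_ifs <;> ring
      simp_rw [this, Finset.sum_add_distrib]
      simp
      ring
    simp_rw [hs] at h0
    simp only [Finset.sum_const, Finset.card_univ, Fintype.card_fin, nsmul_eq_mul] at h0
    exact nonneg_of_mul_nonneg_right h0 (by positivity)
  by_contra hneg
  push Not at hneg
  obtain ⟨n, hn⟩ := exists_nat_gt (F 0 / (-I))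
  rw [div_lt_iff₀ (by linarith)] at hn
  linarith [key n]

lemma gauss_integrable {b : ℝ} (hb : 0 < b) :
    Integrable (fun y : EuclideanSpace ℝ (Fin d) => Real.exp (-b * ‖y‖ ^ 2)) := by
  have := (GaussianFourier.integrable_cexp_neg_mul_sq_norm_add (V := EuclideanSpace ℝ (Fin d))
    (b := b) (by simpa using hb) 0 0).norm
  refine this.congr (Eventually.of_forall fun y => ?_)
  simp only [Complex.norm_exp]
  congr 1
  simp [← Complex.ofReal_pow]

lemma gauss_pos {b : ℝ} (hb : 0 < b) :
    0 < ∫ y : EuclideanSpace ℝ (Fin d), Real.exp (-b * ‖y‖ ^ 2) := by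
  rw [GaussianFourier.integral_rexp_neg_mul_sq_norm hb]
  positivity

lemma bdd_gauss_integrable {F : EuclideanSpace ℝ (Fin d) → ℝ}
    (hc : Continuous F) {B : ℝ} (hB : ∀ x, |F x| ≤ B) {b : ℝ} (hb : 0 < b) :
    Integrable (fun y : EuclideanSpace ℝ (Fin d) => F y * Real.exp (-b * ‖y‖ ^ 2)) := by
  refine (gauss_integrable hb).bdd_mul (c := B) hc.aestronglyMeasurable (Eventually.of_forall hB)

lemma IsPosDefKernel.gauss_nonneg {F : EuclideanSpace ℝ (Fin d) → ℝ} (hF : IsPosDefKernel F)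
    (hc : Continuous F) {B : ℝ} (hB : ∀ x, |F x| ≤ B) {b : ℝ} (hb : 0 < b) :
    0 ≤ ∫ y, F y * Real.exp (-b * ‖y‖ ^ 2) := by
  let E := EuclideanSpace ℝ (Fin d)
  let g : E → ℝ := fun y => Real.exp (-(2 * b) * ‖y‖ ^ 2)
  have hgi : Integrable g := gauss_integrable (by positivity)
  have hgc : Continuous g := by fun_prop
  have hZ : 0 < ∫ y, g y := gauss_pos (by positivity)
  set Z := ∫ y, g y
  let p : E → ℝ := fun y => g y / Z
  have hp0 : ∀ y, 0 ≤ p y := fun y => div_nonneg (Real.exp_pos _).le hZ.le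
  have hpi : Integrable p := hgi.div_const _
  let ν : Measure E := volume.withDensity fun y => ENNReal.ofReal (p y)
  have : IsProbabilityMeasure ν := by
    constructor
    rw [withDensity_apply _ MeasurableSet.univ, Measure.restrict_univ,
      ← ofReal_integral_eq_lintegral_ofReal hpi (Eventually.of_forall hp0)]
    simp only [p, integral_div]
    rw [div_self hZ.ne', ENNReal.ofReal_one]
  have hintg : ∀ f : E → ℝ, ∫ y, f y ∂ν = ∫ y, p y * f y := by
    intro f
    have hpm : Measurable p := by
      exact (by fun_prop : Continuous p).measurable
    rw [integral_withDensity_eq_integral_toReal_smul (by fun_prop) (by simp)]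
    simp [ENNReal.toReal_ofReal (hp0 _)]
  have h0 := hF.integral_nonneg hc hB ν
  have hi : Integrable (fun q : E × E => F (q.1 - q.2)) (ν.prod ν) := by
    refine Integrable.of_bound (C := B) ?_ (Eventually.of_forall fun ω => hB _)
    exact (by fun_prop : Continuous fun q : E × E => F (q.1 - q.2)).aestronglyMeasurable
  rw [integral_prod_symm _ hi] at h0
  simp_rw [hintg] at h0
  have h1 : ∀ v : E, ∫ u, p u * F (u - v) = ∫ w, p (w + v) * F w := by
    intro v
    rw [← integral_add_right_eq_self (fun u => p u * F (u - v)) v]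
    simp
  simp_rw [h1, ← integral_const_mul] at h0
  rw [integral_integral_swap] at h0
  · have h2 : ∀ w : E, ∫ v, p v * (p (w + v) * F w) =
        (F w * Real.exp (-b * ‖w‖ ^ 2)) * ((∫ v : E, Real.exp (-(4 * b) * ‖v‖ ^ 2)) / Z ^ 2) := by
      intro w
      rw [← integral_add_right_eq_self (fun v : E => Real.exp (-(4 * b) * ‖v‖ ^ 2)) ((1 / 2 : ℝ) • w),
        ← integral_div, ← integral_const_mul]
      congr 1
      ext v
      simp only [p, g]
      have e : Real.exp (-(2 * b) * ‖v‖ ^ 2) * Real.exp (-(2 * b) * ‖w + v‖ ^ 2) =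
          Real.exp (-b * ‖w‖ ^ 2) * Real.exp (-(4 * b) * ‖v + (1 / 2 : ℝ) • w‖ ^ 2) := by
        rw [← Real.exp_add, ← Real.exp_add]
        congr 1
        rw [norm_add_sq_real, norm_add_sq_real, norm_smul, inner_smul_right, real_inner_comm v w]
        simp
        ring
      calc _ = (Real.exp (-(2 * b) * ‖v‖ ^ 2) * Real.exp (-(2 * b) * ‖w + v‖ ^ 2)) * F w / Z ^ 2 := by
            ring
        _ = _ := by rw [e]; ring
    simp_rw [h2] at h0
    rw [integral_mul_const] at h0
    exact nonneg_of_mul_nonneg_left h0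
      (div_pos (gauss_pos (by positivity)) (by positivity))
  · have hdom : Integrable (fun q : E × E => (B / Z ^ 2) *
        (Real.exp (-(2 * b / 3) * ‖q.1‖ ^ 2) * Real.exp (-(2 * b / 3) * ‖q.2‖ ^ 2)))
        (volume.prod volume) :=
      ((gauss_integrable (by positivity)).mul_prod (gauss_integrable (by positivity))).const_mul _
    refine hdom.mono' ?_ (Eventually.of_forall fun q => ?_)
    · exact (by fun_prop : Continuous fun q : E × E =>
        p q.1 * (p (q.2 + q.1) * F q.2)).aestronglyMeasurable
    · obtain ⟨v, w⟩ := q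
      simp only [Function.uncurry, p, g, Real.norm_eq_abs]
      have hB0 : 0 ≤ B := (abs_nonneg _).trans (hB 0)
      rw [abs_mul, abs_mul, abs_of_pos (div_pos (Real.exp_pos _) hZ),
        abs_of_pos (div_pos (Real.exp_pos _) hZ)]
      have e : Real.exp (-(2 * b) * ‖v‖ ^ 2) * Real.exp (-(2 * b) * ‖w + v‖ ^ 2) ≤
          Real.exp (-(2 * b / 3) * ‖v‖ ^ 2) * Real.exp (-(2 * b / 3) * ‖w‖ ^ 2) := by
        rw [← Real.exp_add, ← Real.exp_add, Real.exp_le_exp]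
        have h1 : ‖w‖ ≤ ‖w + v‖ + ‖v‖ := by
          simpa using norm_sub_le (w + v) v
        have h2 : ‖w‖ ^ 2 ≤ 2 * ‖w + v‖ ^ 2 + 2 * ‖v‖ ^ 2 := by
          nlinarith [norm_nonneg w, norm_nonneg (w + v), norm_nonneg v,
            sq_nonneg (‖w + v‖ - ‖v‖)]
        have h3 : ‖v‖ ^ 2 + ‖w‖ ^ 2 ≤ 3 * (‖v‖ ^ 2 + ‖w + v‖ ^ 2) := by
          nlinarith [sq_nonneg ‖w + v‖]
        nlinarith
      calc _ = (Real.exp (-(2 * b) * ‖v‖ ^ 2) * Real.exp (-(2 * b) * ‖w + v‖ ^ 2)) * |F w| / Z ^ 2 := by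
            ring
        _ ≤ (Real.exp (-(2 * b / 3) * ‖v‖ ^ 2) * Real.exp (-(2 * b / 3) * ‖w‖ ^ 2)) * B / Z ^ 2 := by
            gcongr
            exact hB w
        _ = _ := by ring

end posdef

section positivity
variable {d : ℕ}

lemma polar_prod_nonneg (hd : 1 ≤ d) {f : EuclideanSpace ℝ (Fin d) → ℝ} (hf : ∀ w, 0 ≤ f w)
    {q : ℝ → ℝ} (hq : 0 ≤ ∫ r in Ioi (0 : ℝ), r ^ (d - 1) * q r) :
    0 ≤ ∫ y : EuclideanSpace ℝ (Fin d), f (‖y‖⁻¹ • y) * q ‖y‖ := by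
  let E := EuclideanSpace ℝ (Fin d)
  have : Nontrivial E := by
    have : Nonempty (Fin d) := ⟨⟨0, hd⟩⟩
    infer_instance
  have hdim : Module.finrank ℝ E = d := by simp [E]
  have e1 : ∫ y : E, f (‖y‖⁻¹ • y) * q ‖y‖ =
      ∫ p, f p.1 * q p.2 ∂(volume : Measure E).toSphere.prod (.volumeIoiPow (d - 1)) := by
    calc _ = ∫ x : ({(0)}ᶜ : Set E), f (‖x.1‖⁻¹ • x.1) * q ‖x.1‖ ∂(volume.comap Subtype.val) := by
          rw [integral_subtype_comap (measurableSet_singleton _).compl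
            fun x : E ↦ f (‖x‖⁻¹ • x) * q ‖x‖, restrict_compl_singleton]
      _ = _ := by
          have := (volume : Measure E).measurePreserving_homeomorphUnitSphereProd.integral_comp
            (Homeomorph.measurableEmbedding _)
            (fun p : Metric.sphere (0 : E) 1 × Ioi (0 : ℝ) => f p.1.1 * q p.2.1)
          rw [hdim] at this
          simpa using this
  have e2 : ∫ r : Ioi (0 : ℝ), q r ∂(Measure.volumeIoiPow (d - 1)) =
      ∫ r in Ioi (0 : ℝ), r ^ (d - 1) * q r := by
    simp only [Measure.volumeIoiPow, ENNReal.ofReal]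
    rw [integral_withDensity_eq_integral_smul,
      integral_subtype_comap measurableSet_Ioi fun a ↦ Real.toNNReal (a ^ (d - 1)) • q a,
      setIntegral_congr_fun measurableSet_Ioi fun x hx ↦ ?_]
    · rw [NNReal.smul_def, Real.coe_toNNReal _ (pow_nonneg (le_of_lt hx) _), smul_eq_mul]
    · exact (measurable_subtype_coe.pow_const _).real_toNNReal
  have e3 := integral_prod_mul (μ := (volume : Measure E).toSphere)
    (ν := Measure.volumeIoiPow (d - 1)) (fun w => f w) (fun r => q r)
  rw [e1]
  refine (mul_nonneg ?_ ?_).trans_eq e3.symm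
  · exact MeasureTheory.integral_nonneg fun w => hf _
  · rw [e2]; exact hq

lemma radial_weight (hd : 1 ≤ d) {B c M : ℝ} (hB : 0 ≤ B) (hc : 0 < c) (hM : 1 ≤ M) :
    ∃ M0, M ≤ M0 ∧ 0 ≤ ∫ r in Ioi (0 : ℝ), r ^ (d - 1) *
      ((Ioc M M0).indicator (fun r => c / r ^ d) r - (Iic M).indicator (fun _ => B) r) := by
  have hM0 : 0 < M := by linarith
  refine ⟨M * Real.exp (B * M ^ d / c), ?_, ?_⟩
  · exact le_mul_of_one_le_right hM0.le (Real.one_le_exp (by positivity))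
  set M0 := M * Real.exp (B * M ^ d / c) with hM0def
  have hMM : M ≤ M0 := le_mul_of_one_le_right hM0.le (Real.one_le_exp (by positivity))
  have hM0p : 0 < M0 := hM0.trans_le hMM
  have e : ∀ r ∈ Ioi (0 : ℝ), r ^ (d - 1) *
      ((Ioc M M0).indicator (fun r => c / r ^ d) r - (Iic M).indicator (fun _ => B) r) =
      (Ioc M M0).indicator (fun r => c * r⁻¹) r -
        (Ioc 0 M).indicator (fun r => B * r ^ (d - 1)) r := by
    intro r hr
    have hr0 : (0 : ℝ) < r := hr
    have hp : r ^ d = r ^ (d - 1) * r := by rw [← pow_succ, Nat.sub_add_cancel hd]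
    by_cases h1 : r ≤ M
    · have h2 : r ∉ Ioc M M0 := fun h => absurd h.1 (not_lt.2 h1)
      rw [indicator_of_notMem h2, indicator_of_notMem h2, indicator_of_mem (show r ∈ Iic M from h1),
        indicator_of_mem (show r ∈ Ioc 0 M from ⟨hr0, h1⟩)]
      ring
    · rw [indicator_of_notMem (show r ∉ Iic M from h1),
        indicator_of_notMem (show r ∉ Ioc 0 M from fun h => h1 h.2)]
      by_cases h2 : r ≤ M0
      · have h3 : r ∈ Ioc M M0 := ⟨not_le.1 h1, h2⟩
        rw [indicator_of_mem h3, indicator_of_mem h3, hp]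
        field_simp
        ring
      · have h3 : r ∉ Ioc M M0 := fun h => h2 h.2
        rw [indicator_of_notMem h3, indicator_of_notMem h3]; simp
  rw [setIntegral_congr_fun measurableSet_Ioi e]
  have i1 : IntegrableOn (fun r : ℝ => c * r⁻¹) (Ioc M M0) := by
    have : IntervalIntegrable (fun r : ℝ => c * r⁻¹) volume M M0 := by
      refine ContinuousOn.intervalIntegrable ?_
      refine continuousOn_const.mul (continuousOn_id.inv₀ fun r hr => ?_)
      rw [uIcc_of_le hMM] at hr
      exact (hM0.trans_le hr.1).ne'
    exact (intervalIntegrable_iff_integrableOn_Ioc_of_le hMM).1 this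
  have i2 : IntegrableOn (fun r : ℝ => B * r ^ (d - 1)) (Ioc 0 M) := by
    have : IntervalIntegrable (fun r : ℝ => B * r ^ (d - 1)) volume 0 M :=
      (by fun_prop : Continuous fun r : ℝ => B * r ^ (d - 1)).intervalIntegrable _ _
    exact (intervalIntegrable_iff_integrableOn_Ioc_of_le hM0.le).1 this
  have s1 : Ioi (0 : ℝ) ∩ Ioc M M0 = Ioc M M0 :=
    inter_eq_right.2 fun r hr => hM0.trans hr.1
  have s2 : Ioi (0 : ℝ) ∩ Ioc 0 M = Ioc 0 M := inter_eq_right.2 fun r hr => hr.1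
  rw [integral_sub, setIntegral_indicator measurableSet_Ioc, setIntegral_indicator measurableSet_Ioc,
    s1, s2, ← intervalIntegral.integral_of_le hMM, ← intervalIntegral.integral_of_le hM0.le,
    intervalIntegral.integral_const_mul, integral_inv_of_pos hM0 hM0p]
  · have : M0 / M = Real.exp (B * M ^ d / c) := by rw [hM0def]; field_simp
    rw [this, Real.log_exp, intervalIntegral.integral_const_mul, integral_pow]
    have hd' : ((d - 1 : ℕ) : ℝ) + 1 = d := by
      rw [← Nat.cast_add_one, Nat.sub_add_cancel hd]
    rw [hd', Nat.sub_add_cancel hd, zero_pow (by omega), sub_zero]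
    have hd1 : (1 : ℝ) ≤ d := by exact_mod_cast hd
    have h1 : M ^ d / d ≤ M ^ d := div_le_self (by positivity) hd1
    have h2 : c * (B * M ^ d / c) = B * M ^ d := by field_simp
    rw [h2, sub_nonneg]
    exact mul_le_mul_of_nonneg_left h1 hB
  · exact ((integrable_indicator_iff measurableSet_Ioc).2 i1).integrableOn
  · exact ((integrable_indicator_iff measurableSet_Ioc).2 i2).integrableOn

lemma smooth_nonneg (hd : 1 ≤ d) {h : EuclideanSpace ℝ (Fin d) → ℝ} {k : ℝ → ℝ}
    (hcont : Continuous h) (hrad : ∀ x, h x = k ‖x‖) {B : ℝ} (hB : ∀ x, |h x| ≤ B)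
    {c M : ℝ} (hc : 0 < c) (hM : 1 ≤ M) (hk : ∀ r, M ≤ r → c ≤ k r * r ^ d) :
    ∃ b > 0, ∀ x : EuclideanSpace ℝ (Fin d), 0 ≤ ∫ y, h (x + y) * Real.exp (-b * ‖y‖ ^ 2) := by
  let E := EuclideanSpace ℝ (Fin d)
  have hB0 : 0 ≤ B := (abs_nonneg _).trans (hB 0)
  obtain ⟨M0, hMM, hq⟩ := radial_weight (d := d) hd (c := c * Real.exp (-1)) hB0 (by positivity) hM
  have hMp : 0 < M := by linarith
  have hM0p : 0 < M0 := hMp.trans_le hMM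
  set q : ℝ → ℝ := fun r => (Ioc M M0).indicator (fun r => c * Real.exp (-1) / r ^ d) r -
    (Iic M).indicator (fun _ => B) r with hqdef
  set b := 1 / M0 ^ 2 with hb
  have hbp : 0 < b := by positivity
  refine ⟨b, hbp, fun x => ?_⟩
  have heven : ∀ y, h (-y) = h y := fun y => by rw [hrad, hrad, norm_neg]
  have hgi : ∀ x : E, Integrable (fun y : E => h y * Real.exp (-b * ‖y - x‖ ^ 2)) := by
    intro x
    have h1 := (gauss_integrable (d := d) hbp).comp_sub_right x
    exact h1.bdd_mul (c := B) hcont.aestronglyMeasurable (Eventually.of_forall hB)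
  have e1 : ∫ y, h (x + y) * Real.exp (-b * ‖y‖ ^ 2) = ∫ y, h y * Real.exp (-b * ‖y - x‖ ^ 2) := by
    rw [← integral_add_left_eq_self (fun y => h y * Real.exp (-b * ‖y - x‖ ^ 2)) x]
    simp
  have e2 : ∫ y, h (x + y) * Real.exp (-b * ‖y‖ ^ 2) =
      ∫ y, h y * Real.exp (-b * ‖y - (-x)‖ ^ 2) := by
    rw [e1, ← integral_neg_eq_self]
    refine integral_congr_ae (Eventually.of_forall fun y => ?_)
    simp only [heven]
    rw [show -y - x = -(y - -x) by abel, norm_neg]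
  have e3 : 2 * ∫ y, h (x + y) * Real.exp (-b * ‖y‖ ^ 2) =
      ∫ y, (2 * Real.exp (-b * ‖x‖ ^ 2)) * (h y * Real.exp (-b * ‖y‖ ^ 2) *
        Real.cosh (2 * b * inner ℝ x y)) := by
    rw [two_mul]
    nth_rewrite 1 [e1]
    rw [e2, ← integral_add (hgi x) (hgi (-x))]
    refine integral_congr_ae (Eventually.of_forall fun y => ?_)
    simp only [sub_neg_eq_add]
    have a1 : Real.exp (-b * ‖y - x‖ ^ 2) = Real.exp (-b * ‖x‖ ^ 2) * Real.exp (-b * ‖y‖ ^ 2) *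
        Real.exp (2 * b * inner ℝ x y) := by
      rw [← Real.exp_add, ← Real.exp_add, norm_sub_sq_real, real_inner_comm]; congr 1; ring
    have a2 : Real.exp (-b * ‖y + x‖ ^ 2) = Real.exp (-b * ‖x‖ ^ 2) * Real.exp (-b * ‖y‖ ^ 2) *
        Real.exp (-(2 * b * inner ℝ x y)) := by
      rw [← Real.exp_add, ← Real.exp_add, norm_add_sq_real, real_inner_comm]; congr 1; ring
    rw [a1, a2, Real.cosh_eq]
    ring
  have hGi : Integrable (fun y : E => (2 * Real.exp (-b * ‖x‖ ^ 2)) * (h y * Real.exp (-b * ‖y‖ ^ 2) *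
        Real.cosh (2 * b * inner ℝ x y))) := by
    refine ((hgi x).add (hgi (-x))).congr (Eventually.of_forall fun y => ?_)
    simp only [sub_neg_eq_add, Pi.add_apply]
    have a1 : Real.exp (-b * ‖y - x‖ ^ 2) = Real.exp (-b * ‖x‖ ^ 2) * Real.exp (-b * ‖y‖ ^ 2) *
        Real.exp (2 * b * inner ℝ x y) := by
      rw [← Real.exp_add, ← Real.exp_add, norm_sub_sq_real, real_inner_comm]; congr 1; ring
    have a2 : Real.exp (-b * ‖y + x‖ ^ 2) = Real.exp (-b * ‖x‖ ^ 2) * Real.exp (-b * ‖y‖ ^ 2) *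
        Real.exp (-(2 * b * inner ℝ x y)) := by
      rw [← Real.exp_add, ← Real.exp_add, norm_add_sq_real, real_inner_comm]; congr 1; ring
    rw [a1, a2, Real.cosh_eq]
    ring
  have hGi' : Integrable (fun y : E => h y * Real.exp (-b * ‖y‖ ^ 2) *
        Real.cosh (2 * b * inner ℝ x y)) := by
    refine (hGi.const_mul (2 * Real.exp (-b * ‖x‖ ^ 2))⁻¹).congr (Eventually.of_forall fun y => ?_)
    have := Real.exp_pos (-b * ‖x‖ ^ 2)
    field_simp
  rw [integral_const_mul] at e3
  let f : E → ℝ := fun w => Real.cosh (2 * b * M * inner ℝ x w)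
  have hf : ∀ w, 0 ≤ f w := fun w => (Real.cosh_pos _).le
  have hpol := polar_prod_nonneg hd hf hq
  -- pointwise comparison
  have hpt : ∀ y : E, f (‖y‖⁻¹ • y) * q ‖y‖ ≤
      h y * Real.exp (-b * ‖y‖ ^ 2) * Real.cosh (2 * b * inner ℝ x y) := by
    intro y
    set s := inner ℝ x (‖y‖⁻¹ • y) with hs
    have hxy : inner ℝ x y = ‖y‖ * s := by
      rcases eq_or_ne y 0 with rfl | hy
      · simp
      · rw [hs, inner_smul_right]
        have := norm_ne_zero_iff.2 hy
        field_simp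
    have hfy : f (‖y‖⁻¹ • y) = Real.cosh (2 * b * M * s) := rfl
    rw [hfy, hxy]
    have hab : ∀ r : ℝ, 0 ≤ r → |2 * b * r * s| = r * |2 * b * s| := by
      intro r hr
      rw [show 2 * b * r * s = r * (2 * b * s) by ring, abs_mul, abs_of_nonneg hr]
    have hassoc : 2 * b * (‖y‖ * s) = 2 * b * ‖y‖ * s := by ring
    rw [hassoc]
    have hcp := Real.cosh_pos (2 * b * M * s)
    have hcp' := Real.cosh_pos (2 * b * ‖y‖ * s)
    have hexp1 : Real.exp (-b * ‖y‖ ^ 2) ≤ 1 := by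
      rw [Real.exp_le_one_iff]; nlinarith [sq_nonneg ‖y‖]
    by_cases h1 : ‖y‖ ≤ M
    · have hqy : q ‖y‖ = -B := by
        have h2 : ‖y‖ ∉ Ioc M M0 := fun h => absurd h.1 (not_lt.2 h1)
        simp only [hqdef]
        rw [indicator_of_notMem h2, indicator_of_mem (show ‖y‖ ∈ Iic M from h1), zero_sub]
      rw [hqy]
      have hch : Real.cosh (2 * b * ‖y‖ * s) ≤ Real.cosh (2 * b * M * s) := by
        rw [Real.cosh_le_cosh, hab _ (norm_nonneg y), hab _ hMp.le]
        gcongr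
      have h3 : |h y * Real.exp (-b * ‖y‖ ^ 2) * Real.cosh (2 * b * ‖y‖ * s)| ≤
          B * 1 * Real.cosh (2 * b * M * s) := by
        rw [abs_mul, abs_mul, abs_of_pos (Real.exp_pos _), abs_of_pos hcp']
        gcongr
        exact hB y
      linarith [(abs_le.1 h3).1]
    · push Not at h1
      have hyp : 0 < ‖y‖ := hMp.trans h1
      have hky := hk ‖y‖ h1.le
      rw [← hrad, ← div_le_iff₀ (by positivity)] at hky
      have hhy : 0 < h y := lt_of_lt_of_le (by positivity) hky
      have hni : ‖y‖ ∉ Iic M := not_le.2 h1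
      by_cases h2 : ‖y‖ ≤ M0
      · have hqy : q ‖y‖ = c * Real.exp (-1) / ‖y‖ ^ d := by
          simp only [hqdef]
          rw [indicator_of_mem (show ‖y‖ ∈ Ioc M M0 from ⟨h1, h2⟩), indicator_of_notMem hni, sub_zero]
        rw [hqy]
        have hch : Real.cosh (2 * b * M * s) ≤ Real.cosh (2 * b * ‖y‖ * s) := by
          rw [Real.cosh_le_cosh, hab _ (norm_nonneg y), hab _ hMp.le]
          gcongr
        have hex : Real.exp (-1) ≤ Real.exp (-b * ‖y‖ ^ 2) := by
          rw [Real.exp_le_exp]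
          have : ‖y‖ ^ 2 ≤ M0 ^ 2 := by gcongr
          have : b * ‖y‖ ^ 2 ≤ 1 := by
            rw [hb, one_div_mul_eq_div, div_le_one (by positivity)]; exact this
          linarith
        calc _ = c / ‖y‖ ^ d * Real.exp (-1) * Real.cosh (2 * b * M * s) := by ring
          _ ≤ _ := by gcongr
      · have hqy : q ‖y‖ = 0 := by
          simp only [hqdef]
          rw [indicator_of_notMem (fun h : ‖y‖ ∈ Ioc M M0 => h2 h.2), indicator_of_notMem hni, sub_zero]
        rw [hqy, mul_zero]
        positivity
  have hqm : Measurable q := by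
    refine Measurable.sub (Measurable.indicator (by fun_prop) measurableSet_Ioc)
      (Measurable.indicator (by fun_prop) measurableSet_Iic)
  have hfm : Measurable (fun y : E => f (‖y‖⁻¹ • y) * q ‖y‖) := by
    have h1 : Measurable (fun y : E => ‖y‖⁻¹ • y) := by fun_prop
    have h2 : Continuous f := by
      exact Real.continuous_cosh.comp (by fun_prop)
    exact (h2.measurable.comp h1).mul (hqm.comp measurable_norm)
  have hqb : ∀ y : E, |f (‖y‖⁻¹ • y) * q ‖y‖| ≤
      (Metric.closedBall (0 : E) M0).indicator (fun _ => Real.cosh (2 * b * M * ‖x‖) * (c + B)) y := by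
    intro y
    by_cases hy : ‖y‖ ≤ M0
    · rw [indicator_of_mem (by simpa using hy), abs_mul]
      have h1 : |f (‖y‖⁻¹ • y)| ≤ Real.cosh (2 * b * M * ‖x‖) := by
        rw [abs_of_nonneg (hf _)]
        simp only [f]
        rw [Real.cosh_le_cosh, abs_mul, abs_mul (2 * b * M), abs_norm]
        gcongr
        refine (abs_real_inner_le_norm _ _).trans ?_
        refine mul_le_of_le_one_right (norm_nonneg _) ?_
        rw [norm_smul, norm_inv, norm_norm]
        exact inv_mul_le_one
      have h2 : |q ‖y‖| ≤ c + B := by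
        have i1 : |(Ioc M M0).indicator (fun r => c * Real.exp (-1) / r ^ d) ‖y‖| ≤ c := by
          by_cases hm : ‖y‖ ∈ Ioc M M0
          · rw [indicator_of_mem hm]
            have hy1 : 1 ≤ ‖y‖ := hM.trans hm.1.le
            rw [abs_of_nonneg (by positivity)]
            calc c * Real.exp (-1) / ‖y‖ ^ d ≤ c * Real.exp (-1) :=
                  div_le_self (by positivity) (one_le_pow₀ hy1)
              _ ≤ c := mul_le_of_le_one_right hc.le (Real.exp_le_one_iff.2 (by norm_num))
          · rw [indicator_of_notMem hm]; simpa using hc.le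
        have i2 : |(Iic M).indicator (fun _ => B) ‖y‖| ≤ B := by
          by_cases hm : ‖y‖ ∈ Iic M
          · rw [indicator_of_mem hm, abs_of_nonneg hB0]
          · rw [indicator_of_notMem hm]; simpa using hB0
        exact (abs_sub _ _).trans (add_le_add i1 i2)
      exact mul_le_mul h1 h2 (abs_nonneg _) (Real.cosh_pos _).le
    · have hy' : q ‖y‖ = 0 := by
        simp only [hqdef]
        rw [indicator_of_notMem (fun h : ‖y‖ ∈ Ioc M M0 => hy h.2),
          indicator_of_notMem (fun h : ‖y‖ ∈ Iic M => hy (le_trans h hMM)), sub_zero]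
      rw [hy', mul_zero, abs_zero]
      exact indicator_nonneg (fun _ _ => mul_nonneg (Real.cosh_pos _).le (by linarith)) _
  have hqi : Integrable (fun y : E => f (‖y‖⁻¹ • y) * q ‖y‖) := by
    refine Integrable.mono' (g := (Metric.closedBall (0 : E) M0).indicator
      (fun _ => Real.cosh (2 * b * M * ‖x‖) * (c + B))) ?_ hfm.aestronglyMeasurable
      (Eventually.of_forall hqb)
    rw [integrable_indicator_iff Metric.isClosed_closedBall.measurableSet]
    exact integrableOn_const (measure_closedBall_lt_top).ne
  have hfin := hpol.trans (integral_mono hqi hGi' hpt)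
  have hp : 0 ≤ 2 * Real.exp (-b * ‖x‖ ^ 2) := by positivity
  linarith [mul_nonneg hp hfin]

end positivity

section main
variable {d : ℕ}

lemma pow_gauss_integrable {b : ℝ} (hb : 0 < b) (n : ℕ) :
    Integrable (fun y : EuclideanSpace ℝ (Fin d) => ‖y‖ ^ n * Real.exp (-b * ‖y‖ ^ 2)) := by
  have hdom := (gauss_integrable (d := d) (half_pos hb)).const_mul
    ((n.factorial : ℝ) * Real.exp (1 / (2 * b)))
  refine hdom.mono' (by fun_prop) (Eventually.of_forall fun y => ?_)
  rw [Real.norm_eq_abs, abs_of_nonneg (by positivity)]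
  set t := ‖y‖
  have ht : 0 ≤ t := norm_nonneg _
  have h1 : t ^ n ≤ n.factorial * Real.exp t := by
    have := Real.pow_div_factorial_le_exp (x := t) ht n
    rw [div_le_iff₀ (by positivity)] at this
    linarith
  have h2 : t ≤ 1 / (2 * b) + b / 2 * t ^ 2 := by
    have : 1 / (2 * b) + b / 2 * t ^ 2 - t = (b * t - 1) ^ 2 / (2 * b) := by
      field_simp; ring
    have h3 : 0 ≤ (b * t - 1) ^ 2 / (2 * b) := by positivity
    linarith
  calc t ^ n * Real.exp (-b * t ^ 2) ≤
        (n.factorial * Real.exp (1 / (2 * b) + b / 2 * t ^ 2)) * Real.exp (-b * t ^ 2) := by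
        gcongr
        exact h1.trans (by gcongr)
    _ = n.factorial * Real.exp (1 / (2 * b)) * Real.exp (-(b / 2) * t ^ 2) := by
        rw [mul_assoc, mul_assoc, ← Real.exp_add, ← Real.exp_add]
        congr 2; ring

/-- Gaussian smoothing of a function. -/
noncomputable def gsmooth (h : EuclideanSpace ℝ (Fin d) → ℝ) (b : ℝ)
    (x : EuclideanSpace ℝ (Fin d)) : ℝ :=
  (∫ y, h (x + y) * Real.exp (-b * ‖y‖ ^ 2)) /
    ∫ y : EuclideanSpace ℝ (Fin d), Real.exp (-b * ‖y‖ ^ 2)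

lemma gsmooth_continuous {h : EuclideanSpace ℝ (Fin d) → ℝ} (hc : Continuous h) {B : ℝ}
    (hB : ∀ x, |h x| ≤ B) {b : ℝ} (hb : 0 < b) : Continuous (gsmooth h b) := by
  refine Continuous.div_const ?_ _
  refine continuous_of_dominated (bound := fun y => B * Real.exp (-b * ‖y‖ ^ 2)) ?_ ?_
    ((gauss_integrable hb).const_mul B) ?_
  · intro x
    exact (by fun_prop : Continuous fun y => h (x + y) * Real.exp (-b * ‖y‖ ^ 2)).aestronglyMeasurable
  · intro x
    refine Eventually.of_forall fun y => ?_
    rw [Real.norm_eq_abs, abs_mul, abs_of_pos (Real.exp_pos _)]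
    gcongr
    exact hB _
  · exact Eventually.of_forall fun y => by fun_prop

lemma gsmooth_isotropic {h : EuclideanSpace ℝ (Fin d) → ℝ} (hi : IsIsotropic h) (b : ℝ) :
    IsIsotropic (gsmooth h b) := by
  intro x x' hx
  let ρ := Submodule.reflection (Submodule.span ℝ {x - x'})ᗮ
  have hρ : ρ x = x' := Submodule.reflection_sub hx
  unfold gsmooth
  congr 1
  rw [← ρ.measurePreserving.integral_comp ρ.toHomeomorph.measurableEmbedding
    (fun y => h (x' + y) * Real.exp (-b * ‖y‖ ^ 2))]
  refine integral_congr_ae (Eventually.of_forall fun y => ?_)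
  simp only [ρ.norm_map]
  rw [← hρ, ← map_add, hi _ _ (ρ.norm_map (x + y))]

lemma gsmooth_quad {h : EuclideanSpace ℝ (Fin d) → ℝ} (hc : Continuous h) {B : ℝ}
    (hB : ∀ x, |h x| ≤ B) {b : ℝ} (hb : 0 < b) {n : ℕ}
    (x : Fin n → EuclideanSpace ℝ (Fin d)) (c : Fin n → ℝ) :
    ∑ i, ∑ j, c i * c j * gsmooth h b (x i - x j) =
      (∫ y, (∑ i, ∑ j, c i * c j * h (x i - x j + y)) * Real.exp (-b * ‖y‖ ^ 2)) /
        ∫ y : EuclideanSpace ℝ (Fin d), Real.exp (-b * ‖y‖ ^ 2) := by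
  have hintg : ∀ i j, Integrable (fun y => c i * c j * (h (x i - x j + y) * Real.exp (-b * ‖y‖ ^ 2))) :=
    fun i j => (bdd_gauss_integrable (F := fun y => h (x i - x j + y)) (by fun_prop)
      (fun y => hB _) hb).const_mul _
  simp_rw [Finset.sum_mul, mul_assoc (c _ * c _)]
  rw [integral_finsetSum _ (fun i _ => integrable_finsetSum _ fun j _ => hintg i j)]
  simp_rw [integral_finsetSum _ (fun j _ => hintg _ j), integral_const_mul]
  unfold gsmooth
  simp_rw [Finset.sum_div, mul_div_assoc]

lemma quad_bdd {h : EuclideanSpace ℝ (Fin d) → ℝ} {B : ℝ}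
    (hB : ∀ x, |h x| ≤ B) {n : ℕ}
    (x : Fin n → EuclideanSpace ℝ (Fin d)) (c : Fin n → ℝ) (y : EuclideanSpace ℝ (Fin d)) :
    |∑ i, ∑ j, c i * c j * h (x i - x j + y)| ≤ ∑ i, ∑ j, |c i * c j| * B := by
  refine (Finset.abs_sum_le_sum_abs _ _).trans (Finset.sum_le_sum fun i _ => ?_)
  refine (Finset.abs_sum_le_sum_abs _ _).trans (Finset.sum_le_sum fun j _ => ?_)
  rw [abs_mul]
  exact mul_le_mul_of_nonneg_left (hB _) (abs_nonneg _)

lemma gsmooth_posdef {h : EuclideanSpace ℝ (Fin d) → ℝ} (hpd : IsPosDefKernel h)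
    (hc : Continuous h) {B : ℝ} (hB : ∀ x, |h x| ≤ B) {b : ℝ} (hb : 0 < b) :
    IsPosDefKernel (gsmooth h b) := by
  intro n x c
  rw [gsmooth_quad hc hB hb]
  exact div_nonneg ((hpd.quad x c).gauss_nonneg (by fun_prop) (quad_bdd hB x c) hb)
    (gauss_pos hb).le

lemma sub_gsmooth_posdef {h : EuclideanSpace ℝ (Fin d) → ℝ} (hpd : IsPosDefKernel h)
    (hc : Continuous h) {B : ℝ} (hB : ∀ x, |h x| ≤ B) {b : ℝ} (hb : 0 < b) :
    IsPosDefKernel (h - gsmooth h b) := by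
  intro n x c
  simp only [Pi.sub_apply, mul_sub, Finset.sum_sub_distrib]
  rw [gsmooth_quad hc hB hb, sub_nonneg, div_le_iff₀ (gauss_pos hb)]
  set F : EuclideanSpace ℝ (Fin d) → ℝ := fun y => ∑ i, ∑ j, c i * c j * h (x i - x j + y) with hF
  have hF0 : ∑ i, ∑ j, c i * c j * h (x i - x j) = F 0 := by simp [hF]
  have hFpd : IsPosDefKernel F := hpd.quad x c
  have hFi := bdd_gauss_integrable (F := F) (by fun_prop) (quad_bdd hB x c) hb
  have hFi' : Integrable (fun y => F (-y) * Real.exp (-b * ‖y‖ ^ 2)) := by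
    simpa using hFi.comp_neg
  have e : ∫ y, F (-y) * Real.exp (-b * ‖y‖ ^ 2) = ∫ y, F y * Real.exp (-b * ‖y‖ ^ 2) := by
    rw [← integral_neg_eq_self (fun y => F y * Real.exp (-b * ‖y‖ ^ 2))]
    simp
  have key : ∫ y, (F y * Real.exp (-b * ‖y‖ ^ 2) + F (-y) * Real.exp (-b * ‖y‖ ^ 2)) ≤
      ∫ y : EuclideanSpace ℝ (Fin d), (2 * F 0) * Real.exp (-b * ‖y‖ ^ 2) := by
    refine integral_mono (hFi.add hFi') ((gauss_integrable hb).const_mul _) fun y => ?_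
    simp only
    rw [← add_mul]
    exact mul_le_mul_of_nonneg_right (hFpd.two y).1 (Real.exp_pos _).le
  rw [integral_add hFi hFi', e, integral_const_mul] at key
  rw [hF0]
  linarith

lemma gsmooth_asymp {h : EuclideanSpace ℝ (Fin d) → ℝ} {k : ℝ → ℝ}
    (hcont : Continuous h) (hrad : ∀ x, h x = k ‖x‖) {B : ℝ} (hB : ∀ x, |h x| ≤ B)
    {c M : ℝ} (hc : 0 < c) (hk : ∀ r, M ≤ r → c ≤ k r * r ^ d)
    {B' R : ℝ} (hR : 1 ≤ R)
    (hk2 : ∀ r, R ≤ r → 0 < k r ∧ ∀ s, r / 2 ≤ s → s ≤ 2 * r → |k s| ≤ B' * k r)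
    (hk3 : ∀ ε > 0, ∃ δ > 0, ∃ R, ∀ r, R ≤ r → ∀ s, |s / r - 1| < δ → |k s / k r - 1| ≤ ε)
    {b : ℝ} (hb : 0 < b) :
    Tendsto (fun x => gsmooth h b x / h x) (comap (fun x => ‖x‖) atTop) (𝓝 1) := by
  let E := EuclideanSpace ℝ (Fin d)
  have hB0 : 0 ≤ B := (abs_nonneg _).trans (hB 0)
  have hZ := gauss_pos (d := d) hb
  have hnorm : Tendsto (fun x : E => ‖x‖) (comap (fun x => ‖x‖) atTop) atTop := tendsto_comap
  have hlim : Tendsto (fun x : E => ∫ y : E, h (x + y) / h x * Real.exp (-b * ‖y‖ ^ 2))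
      (comap (fun x => ‖x‖) atTop) (𝓝 (∫ y : E, 1 * Real.exp (-b * ‖y‖ ^ 2))) := by
    refine tendsto_integral_filter_of_dominated_convergence
      (fun y => |B'| * Real.exp (-b * ‖y‖ ^ 2) +
        (B / c * 2 ^ d) * (‖y‖ ^ d * Real.exp (-b * ‖y‖ ^ 2))) ?_ ?_ ?_ ?_
    · refine Eventually.of_forall fun x => ?_
      exact (by fun_prop : Continuous fun y : E =>
        h (x + y) / h x * Real.exp (-b * ‖y‖ ^ 2)).aestronglyMeasurable
    · filter_upwards [hnorm.eventually_ge_atTop R, hnorm.eventually_ge_atTop M] with x hx1 hx2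
      refine Eventually.of_forall fun y => ?_
      have hx0 : 0 < ‖x‖ := by linarith
      obtain ⟨hkx, hkb⟩ := hk2 _ hx1
      have hkx' : 0 < h x := by rw [hrad]; exact hkx
      rw [Real.norm_eq_abs, abs_mul, abs_of_pos (Real.exp_pos _), ← mul_assoc, ← add_mul]
      refine mul_le_mul_of_nonneg_right ?_ (Real.exp_pos _).le
      rw [abs_div, abs_of_pos hkx']
      have hp : 0 ≤ B / c * 2 ^ d * ‖y‖ ^ d := by positivity
      by_cases hy : ‖y‖ ≤ ‖x‖ / 2
      · have l1 : ‖x‖ / 2 ≤ ‖x + y‖ := by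
          have := norm_sub_norm_le x (-y)
          rw [norm_neg, sub_neg_eq_add] at this
          linarith
        have l2 : ‖x + y‖ ≤ 2 * ‖x‖ := (norm_add_le x y).trans (by linarith)
        have := hkb _ l1 l2
        rw [← hrad, ← hrad, ← div_le_iff₀ hkx'] at this
        linarith [le_abs_self B']
      · push Not at hy
        have h1 := hk _ hx2
        rw [← hrad] at h1
        have h2 : ‖x‖ ^ d ≤ (2 * ‖y‖) ^ d := by gcongr; linarith
        have h3 : |h (x + y)| / h x ≤ B / c * 2 ^ d * ‖y‖ ^ d := by
          rw [div_le_iff₀ hkx']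
          calc |h (x + y)| ≤ B := hB _
            _ = B / c * c := by field_simp
            _ ≤ B / c * (h x * (2 * ‖y‖) ^ d) := by
                gcongr
                exact h1.trans (by gcongr)
            _ = _ := by rw [mul_pow]; ring
        linarith [abs_nonneg B']
    · exact ((gauss_integrable hb).const_mul _).add ((pow_gauss_integrable hb d).const_mul _)
    · refine Eventually.of_forall fun y => Tendsto.mul_const _ ?_
      rw [Metric.tendsto_nhds]
      intro ε hε
      obtain ⟨δ, hδ, R', hR'⟩ := hk3 (ε / 2) (half_pos hε)
      filter_upwards [hnorm.eventually_ge_atTop R', hnorm.eventually_gt_atTop (‖y‖ / δ),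
        hnorm.eventually_gt_atTop 0] with x hx1 hx2 hx0
      have h1 : |‖x + y‖ / ‖x‖ - 1| < δ := by
        have : ‖x + y‖ / ‖x‖ - 1 = (‖x + y‖ - ‖x‖) / ‖x‖ := by field_simp
        rw [this, abs_div, abs_of_pos hx0, div_lt_iff₀ hx0]
        have h2 : |‖x + y‖ - ‖x‖| ≤ ‖y‖ := by
          simpa using abs_norm_sub_norm_le (x + y) x
        rw [div_lt_iff₀ hδ] at hx2
        linarith
      have := hR' _ hx1 _ h1
      rw [Real.dist_eq, hrad, hrad]
      linarith
  have h2 := hlim.div_const (∫ y : E, Real.exp (-b * ‖y‖ ^ 2))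
  simp only [one_mul] at h2
  rw [div_self hZ.ne'] at h2
  refine h2.congr fun x => ?_
  unfold gsmooth
  have e : ∫ y : E, h (x + y) / h x * Real.exp (-b * ‖y‖ ^ 2) =
      (∫ y : E, h (x + y) * Real.exp (-b * ‖y‖ ^ 2)) / h x := by
    rw [← integral_div]
    refine integral_congr_ae (Eventually.of_forall fun y => ?_)
    simp only
    ring
  rw [e, div_right_comm]

end main

/-- a continuous isotropic positive definite kernel on `ℝ^d` whose radial
profile is regularly varying with index `α ∈ [0,d)` can be decomposed as `h = h₁ + h₂` with
`h₁, h₂` continuous isotropic positive definite, `h₁ ≥ 0` and `h₁(x)/h(x) → 1` as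
`|x| → ∞`. -/
theorem statement4 (d : ℕ) (hd : 1 ≤ d)
    (h : EuclideanSpace ℝ (Fin d) → ℝ) (k : ℝ → ℝ)
    (hcont : Continuous h) (hrad : ∀ x, h x = k ‖x‖) (hpd : IsPosDefKernel h)
    (α : ℝ) (hα0 : 0 ≤ α) (hαd : α < d) (hrv : RegularlyVarying k α) :
    ∃ h₁ h₂ : EuclideanSpace ℝ (Fin d) → ℝ,
      Continuous h₁ ∧ Continuous h₂ ∧ IsIsotropic h₁ ∧ IsIsotropic h₂ ∧
      IsPosDefKernel h₁ ∧ IsPosDefKernel h₂ ∧ h = h₁ + h₂ ∧ (∀ x, 0 ≤ h₁ x) ∧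
      Tendsto (fun x => h₁ x / h x) (comap (fun x => ‖x‖) atTop) (nhds 1) := by
  have heven : ∀ y, h (-y) = h y := fun y => by rw [hrad, hrad, norm_neg]
  have hB : ∀ x, |h x| ≤ h 0 := by
    intro x
    have := hpd.two x
    rw [heven] at this
    rw [abs_le]
    constructor <;> linarith [this.1, this.2]
  have hiso : IsIsotropic h := fun x y hxy => by rw [hrad, hrad, hxy]
  obtain ⟨⟨c, hc, M, hM, hk1⟩, ⟨B', R, hR, hk2⟩, hk3⟩ := rv_facts d hαd hrv
  obtain ⟨b, hb, hpos⟩ := smooth_nonneg hd hcont hrad hB hc hM hk1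
  have hs := gsmooth_isotropic hiso b
  refine ⟨gsmooth h b, h - gsmooth h b, gsmooth_continuous hcont hB hb,
    hcont.sub (gsmooth_continuous hcont hB hb), hs, ?_, gsmooth_posdef hpd hcont hB hb,
    sub_gsmooth_posdef hpd hcont hB hb, by simp, fun x => div_nonneg (hpos x) (gauss_pos hb).le,
    gsmooth_asymp hcont hrad hB hc hk1 hR hk2 hk3 hb⟩
  intro x y hxy
  simp only [Pi.sub_apply]
  rw [hiso x y hxy, hs x y hxy]
end

section
/- Let d ≥ 2 and let K : ℝ^d → ℝ be a continuous, isotropic, positive definite function which is not identically zero, and suppose that the restriction of K to a line, x ↦ K(x e₁) for x ∈ ℝ (where e₁ is a unit vector), is absolutely integrable over ℝ. Then ∫₀^∞ K(x e₁) dx > 0. -/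
open MeasureTheory

open ProbabilityTheory

lemma aux_iid {α : Type*} [MeasurableSpace α] (μ : Measure α) [IsProbabilityMeasure μ]
    (L : α → α → ℝ) (hm : Measurable (Function.uncurry L)) (C : ℝ) (hC : ∀ x y, |L x y| ≤ C)
    (hpd : ∀ (n : ℕ) (x : Fin n → α), 0 ≤ ∑ i, ∑ j, L (x i) (x j)) :
    0 ≤ ∫ p, L p.1 p.2 ∂(μ.prod μ) := by
  set I := ∫ p, L p.1 p.2 ∂(μ.prod μ) with hI
  have key : ∀ n : ℕ, 0 ≤ (n : ℝ) * C + (n : ℝ) * ((n : ℝ) - 1) * I := by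
    intro n
    let P : Measure (Fin n → α) := Measure.pi fun _ => μ
    have hint : ∀ i j : Fin n, Integrable (fun x : Fin n → α => L (x i) (x j)) P := by
      intro i j
      refine Integrable.of_bound (C := C) ?_ ?_
      · have h : Measurable (fun x : Fin n → α => (x i, x j)) :=
          (measurable_pi_apply i).prodMk (measurable_pi_apply j)
        exact (hm.comp h).aestronglyMeasurable
      · exact ae_of_all _ fun x => hC _ _
    have h0 : 0 ≤ ∫ x, ∑ i, ∑ j, L (x i) (x j) ∂P := integral_nonneg fun x => hpd n x
    have h1 : ∫ x, ∑ i, ∑ j, L (x i) (x j) ∂P = ∑ i, ∑ j, ∫ x, L (x i) (x j) ∂P := by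
      rw [integral_finsetSum _ fun i _ => integrable_finsetSum _ fun j _ => hint i j]
      refine Finset.sum_congr rfl fun i _ => ?_
      rw [integral_finsetSum _ fun j _ => hint i j]
    have h2 : ∀ i j : Fin n, ∫ x, L (x i) (x j) ∂P ≤ if i = j then C else I := by
      intro i j
      split_ifs with hij
      · calc ∫ x, L (x i) (x j) ∂P ≤ ∫ x, C ∂P :=
              integral_mono (hint i j) (integrable_const _) fun x => (abs_le.1 (hC _ _)).2
          _ = C := by simp
      · have hind : IndepFun (fun x : Fin n → α => x i) (fun x => x j) P :=
          (iIndepFun_pi (X := fun _ x => x) (fun _ => aemeasurable_id)).indepFun hij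
        rw [indepFun_iff_map_prod_eq_prod_map_map
          (measurable_pi_apply i).aemeasurable (measurable_pi_apply j).aemeasurable] at hind
        have e1 : ∀ i, P.map (fun x : Fin n → α => x i) = μ := fun i =>
          (measurePreserving_eval (fun _ : Fin n => μ) i).map_eq
        rw [e1, e1] at hind
        have h : Measurable (fun x : Fin n → α => (x i, x j)) :=
          (measurable_pi_apply i).prodMk (measurable_pi_apply j)
        have e2 := integral_map (μ := P) h.aemeasurable (f := Function.uncurry L)
          hm.aestronglyMeasurable
        rw [hind] at e2
        exact e2.symm.le
    rw [h1] at h0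
    refine h0.trans ((Finset.sum_le_sum fun i _ => Finset.sum_le_sum fun j _ => h2 i j).trans ?_)
    have : ∀ i : Fin n, ∑ j, (if i = j then C else I) = C + ((n : ℝ) - 1) * I := by
      intro i
      have : ∀ j, (if i = j then C else I) = (if i = j then C - I else 0) + I := by
        intro j; split_ifs <;> ring
      simp only [this, Finset.sum_add_distrib]
      simp; ring
    simp only [this]
    simp
    apply le_of_eq; ring
  by_contra! hneg
  obtain ⟨n, hn⟩ := exists_nat_gt (C / (-I) + 1)
  have h3 := key (n + 1)
  have h4 : C / (-I) < n := by linarith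
  rw [div_lt_iff₀ (by linarith)] at h4
  push_cast at h3
  nlinarith [Nat.cast_nonneg (α := ℝ) n]

lemma aux_sub (v : NNReal) : MeasurePreserving (fun p : ℝ × ℝ => p.1 - p.2)
    ((gaussianReal 0 v).prod (gaussianReal 0 v)) (gaussianReal 0 (v + v)) := by
  refine ⟨by fun_prop, ?_⟩
  have h : MeasurePreserving (fun x : ℝ => -x) (gaussianReal 0 v) (gaussianReal 0 v) :=
    ⟨by fun_prop, by rw [gaussianReal_map_neg]; simp⟩
  have h2 := (MeasurePreserving.id (gaussianReal 0 v)).prod h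
  have h3 := gaussianReal_conv_gaussianReal (m₁ := 0) (m₂ := 0) (v₁ := v) (v₂ := v)
  rw [add_zero, Measure.conv, ← h2.map_eq, Measure.map_map (by fun_prop) (by fun_prop)] at h3
  rw [← h3]
  congr 1
  

lemma aux_comm {α : Type*} [MeasurableSpace α] (μ : Measure α) [IsProbabilityMeasure μ] :
    MeasurePreserving (fun p : (α × α) × (α × α) => ((p.1.1, p.2.1), (p.1.2, p.2.2)))
     ((μ.prod μ).prod (μ.prod μ)) ((μ.prod μ).prod (μ.prod μ)) := by
  have a1 := measurePreserving_prodAssoc μ μ (μ.prod μ)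
  have a2 := (MeasurePreserving.id μ).prod (measurePreserving_prodAssoc μ μ μ).symm
  have a3 := (MeasurePreserving.id μ).prod
    ((Measure.measurePreserving_swap (μ := μ) (ν := μ)).prod (MeasurePreserving.id μ))
  have a4 := (MeasurePreserving.id μ).prod (measurePreserving_prodAssoc μ μ μ)
  have a5 := (measurePreserving_prodAssoc μ μ (μ.prod μ)).symm
  exact a5.comp (a4.comp (a3.comp (a2.comp a1)))

lemma aux_gauss (v : NNReal) (hv : v ≠ 0) (k : ℝ → ℝ) (hk : Continuous k) (C : ℝ)
    (hC : ∀ x, |k x| ≤ C)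
    (hpd : ∀ (n : ℕ) (x : Fin n → ℝ × ℝ), 0 ≤ ∑ i, ∑ j,
       k (√(((x i).1 - (x j).1) ^ 2 + ((x i).2 - (x j).2) ^ 2))) :
    0 ≤ ∫ r in Set.Ioi (0:ℝ), r * (k r * Real.exp (-(r ^ 2 / (2 * (v + v))))) := by
  set γ := gaussianReal 0 v
  set γ' := gaussianReal 0 (v + v) with hγ'
  have h1 := aux_iid (γ.prod γ)
    (fun p q : ℝ × ℝ => k (√((p.1 - q.1) ^ 2 + (p.2 - q.2) ^ 2)))
    (by unfold Function.uncurry; exact (by fun_prop : Continuous _).measurable) C (fun _ _ => hC _) hpd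
  have h2 := ((aux_sub v).prod (aux_sub v)).comp (aux_comm γ)
  have h3 : ∫ p, k (√((p.1.1 - p.2.1) ^ 2 + (p.1.2 - p.2.2) ^ 2)) ∂((γ.prod γ).prod (γ.prod γ))
     = ∫ q, k (√(q.1 ^ 2 + q.2 ^ 2)) ∂(γ'.prod γ') := by
    rw [← h2.map_eq, integral_map h2.aemeasurable
      (by exact (by fun_prop : Continuous _).aestronglyMeasurable)]
    rfl
  rw [h3] at h1
  have hvv : v + v ≠ 0 := by simpa using hv
  have h4 : ∫ q, k (√(q.1 ^ 2 + q.2 ^ 2)) ∂(γ'.prod γ') =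
     ∫ q : ℝ × ℝ, gaussianPDFReal 0 (v+v) q.1 * gaussianPDFReal 0 (v+v) q.2 * k (√(q.1 ^ 2 + q.2 ^ 2)) := by
    have e : γ'.prod γ' = (volume : Measure (ℝ × ℝ)).withDensity
        (fun q => gaussianPDF 0 (v+v) q.1 * gaussianPDF 0 (v+v) q.2) := by
      rw [hγ', gaussianReal_of_var_ne_zero _ hvv, prod_withDensity (by fun_prop) (by fun_prop)]
      rfl
    rw [e, integral_withDensity_eq_integral_toReal_smul (by fun_prop)
      (ae_of_all _ fun q => ENNReal.mul_lt_top gaussianPDF_lt_top gaussianPDF_lt_top)]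
    simp
  rw [h4, ← integral_comp_polarCoord_symm] at h1
  set c := (√(2 * Real.pi * (v + v : NNReal)))⁻¹ with hc
  have hcpos : 0 < c := by positivity
  have h5 : ∫ p in polarCoord.target, p.1 • (fun q : ℝ × ℝ => gaussianPDFReal 0 (v+v) q.1 * gaussianPDFReal 0 (v+v) q.2 * k (√(q.1 ^ 2 + q.2 ^ 2))) (polarCoord.symm p)
      = (∫ r in Set.Ioi (0:ℝ), r * (k r * Real.exp (-(r ^ 2 / (2 * (v + v)))))) * ∫ θ in Set.Ioo (-Real.pi) Real.pi, c ^ 2 := by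
    rw [← setIntegral_prod_mul]
    refine setIntegral_congr_fun (measurableSet_Ioi.prod measurableSet_Ioo) fun p hp => ?_
    have hp1 : 0 < p.1 := hp.1
    have : (p.1 * Real.cos p.2) ^ 2 + (p.1 * Real.sin p.2) ^ 2 = p.1 ^ 2 := by
      linear_combination p.1 ^ 2 * Real.sin_sq_add_cos_sq p.2
    simp only [polarCoord_symm_apply, this, Real.sqrt_sq hp1.le, gaussianPDFReal, sub_zero, smul_eq_mul, ← hc]
    have e2 : Real.exp (-(p.1 ^ 2 / (2 * (v + v)))) = Real.exp (-(p.1 * Real.cos p.2) ^ 2 / (2 * (v + v : NNReal))) *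
      Real.exp (-(p.1 * Real.sin p.2) ^ 2 / (2 * (v + v : NNReal))) := by
      rw [← Real.exp_add, ← this]; congr 1; push_cast; ring
    rw [e2]; ring
  rw [h5] at h1
  have h6 : 0 < ∫ θ in Set.Ioo (-Real.pi) Real.pi, c ^ 2 := by
    rw [setIntegral_const, Real.volume_real_Ioo_of_le (by linarith [Real.pi_pos])]
    have := Real.pi_pos
    rw [smul_eq_mul]
    have : 0 < Real.pi - -Real.pi := by linarith
    positivity
  exact nonneg_of_mul_nonneg_left h1 h6

lemma aux_main (k : ℝ → ℝ) (hk : Continuous k) (C : ℝ) (hC : ∀ x, |k x| ≤ C) (h0 : 0 < k 0)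
    (hint : Integrable k)
    (hJ : ∀ t : ℝ, 0 < t → 0 ≤ ∫ r in Set.Ioi (0:ℝ), r * (k r * Real.exp (-(r ^ 2 * t)))) :
    0 < ∫ x in Set.Ioi (0:ℝ), k x := by
  set J : ℝ → ℝ := fun t => ∫ r in Set.Ioi (0:ℝ), r * (k r * Real.exp (-(r ^ 2 * t))) with hJdef
  have hG : 0 < Real.Gamma (1/2) := Real.Gamma_pos_of_pos (by norm_num)
  have hker : ∀ r : ℝ, 0 < r →
      ∫ t in Set.Ioi (0:ℝ), t ^ ((1/2 : ℝ) - 1) * Real.exp (-(r ^ 2 * t)) = Real.Gamma (1/2) / r := by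
    intro r hr
    rw [Real.integral_rpow_mul_exp_neg_mul_Ioi (by norm_num) (by positivity), ← Real.sqrt_eq_rpow,
      Real.sqrt_div zero_le_one, Real.sqrt_sq hr.le, Real.sqrt_one]
    ring
  have hkint : ∀ r : ℝ, 0 < r → IntegrableOn
      (fun t : ℝ => t ^ ((1/2 : ℝ) - 1) * Real.exp (-(r ^ 2 * t))) (Set.Ioi 0) := by
    intro r hr
    exact .of_integral_ne_zero (by rw [hker r hr]; positivity)
  set F : ℝ → ℝ → ℝ := fun r t => r * k r * (t ^ ((1/2 : ℝ) - 1) * Real.exp (-(r ^ 2 * t))) with hF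
  have hFm : Measurable (Function.uncurry F) := by
    simp only [hF, Function.uncurry_def]
    have := hk.measurable
    fun_prop
  have hFint : Integrable (Function.uncurry F)
      ((volume.restrict (Set.Ioi (0:ℝ))).prod (volume.restrict (Set.Ioi (0:ℝ)))) := by
    rw [integrable_prod_iff hFm.aestronglyMeasurable]
    constructor
    · filter_upwards [ae_restrict_mem measurableSet_Ioi] with r hr
      exact (hkint r hr).const_mul (r * k r)
    · refine Integrable.congr (hint.norm.integrableOn.const_mul (Real.Gamma (1/2))) ?_
      filter_upwards [ae_restrict_mem measurableSet_Ioi] with r hr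
      have hr' : 0 < r := hr
      have : ∫ t in Set.Ioi (0:ℝ), ‖Function.uncurry F (r, t)‖ =
          ∫ t in Set.Ioi (0:ℝ), (r * |k r|) * (t ^ ((1/2 : ℝ) - 1) * Real.exp (-(r ^ 2 * t))) := by
        refine setIntegral_congr_fun measurableSet_Ioi fun t ht => ?_
        have ht' : 0 < t := ht
        have hp : 0 < t ^ ((1/2 : ℝ) - 1) := Real.rpow_pos_of_pos ht' _
        simp only [hF, Function.uncurry, norm_mul, Real.norm_eq_abs, abs_of_pos hr',
          abs_of_pos hp, Real.abs_exp]
      rw [this, integral_const_mul, hker r hr', Real.norm_eq_abs]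
      field_simp
  have hswap := integral_integral_swap hFint
  have hL : ∫ r in Set.Ioi (0:ℝ), ∫ t in Set.Ioi (0:ℝ), F r t =
      Real.Gamma (1/2) * ∫ r in Set.Ioi (0:ℝ), k r := by
    rw [← integral_const_mul]
    refine setIntegral_congr_fun measurableSet_Ioi fun r hr => ?_
    have hr' : 0 < r := hr
    simp only [hF]
    rw [integral_const_mul, hker r hr']
    field_simp
  have hR : ∀ t, ∫ r in Set.Ioi (0:ℝ), F r t = t ^ ((1/2 : ℝ) - 1) * J t := by
    intro t
    rw [hJdef, ← integral_const_mul]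
    congr 1; ext r; simp only [hF]; ring
  have hRint : IntegrableOn (fun t => t ^ ((1/2 : ℝ) - 1) * J t) (Set.Ioi 0) := by
    have := hFint.integral_prod_right
    refine this.congr (ae_of_all _ fun t => hR t)
  have hlim : Filter.Tendsto (fun s : ℝ => ∫ r in Set.Ioi (0:ℝ), r * (k (s⁻¹ * r) * Real.exp (-(1 * r ^ 2))))
      Filter.atTop (nhds (∫ r in Set.Ioi (0:ℝ), r * (k 0 * Real.exp (-(1 * r ^ 2))))) := by
    have hb := (integrable_mul_exp_neg_mul_sq (b := 1) one_pos).integrableOn (s := Set.Ioi (0:ℝ))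
    refine tendsto_integral_filter_of_dominated_convergence
      (fun r => C * (r * Real.exp (-1 * r ^ 2))) ?_ ?_ (hb.const_mul C) ?_
    · exact Filter.Eventually.of_forall fun s => (by fun_prop : Continuous _).aestronglyMeasurable
    · refine Filter.Eventually.of_forall fun s => ?_
      filter_upwards [ae_restrict_mem measurableSet_Ioi] with r hr
      have hr' : 0 < r := hr
      rw [norm_mul, norm_mul, Real.norm_eq_abs, Real.norm_eq_abs, Real.norm_eq_abs, abs_of_pos hr',
        Real.abs_exp, neg_mul]
      calc r * (|k (s⁻¹ * r)| * Real.exp (-(1 * r ^ 2)))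
          ≤ r * (C * Real.exp (-(1 * r ^ 2))) := by gcongr; exact hC _
        _ = _ := by ring
    · refine ae_of_all _ fun r => ?_
      have h1 : Filter.Tendsto (fun s : ℝ => s⁻¹ * r) Filter.atTop (nhds 0) := by
        simpa using tendsto_inv_atTop_zero.mul_const r
      exact (((hk.tendsto 0).comp h1).mul_const _).const_mul _
  have hlimpos : 0 < ∫ r in Set.Ioi (0:ℝ), r * (k 0 * Real.exp (-(1 * r ^ 2))) := by
    have hb := (integrable_mul_exp_neg_mul_sq (b := 1) one_pos).integrableOn (s := Set.Ioi (0:ℝ))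
    have hb2 : IntegrableOn (fun r : ℝ => r * (k 0 * Real.exp (-(1 * r ^ 2)))) (Set.Ioi 0) := by
      refine (hb.const_mul (k 0)).congr (ae_of_all _ fun r => ?_)
      simp only [neg_mul]; ring
    rw [setIntegral_pos_iff_support_of_nonneg_ae _ hb2]
    · have : Set.Ioi (0:ℝ) ⊆ Function.support (fun r : ℝ => r * (k 0 * Real.exp (-(1 * r ^ 2)))) ∩ Set.Ioi 0 := by
        intro r hr
        have hr' : 0 < r := hr
        refine ⟨?_, hr⟩
        rw [Function.mem_support]
        positivity
      refine lt_of_lt_of_le ?_ (measure_mono this)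
      simp
    · filter_upwards [ae_restrict_mem measurableSet_Ioi] with r hr
      have hr' : 0 < r := hr
      simp only [Pi.zero_apply]
      positivity
  have hscale : ∀ s : ℝ, 0 < s →
      ∫ r in Set.Ioi (0:ℝ), r * (k (s⁻¹ * r) * Real.exp (-(1 * r ^ 2))) = s ^ 2 * J (s ^ 2) := by
    intro s hs
    have := integral_comp_mul_left_Ioi (fun r => r * (k r * Real.exp (-(r ^ 2 * s ^ 2)))) 0
      (inv_pos.2 hs)
    rw [mul_zero, inv_inv, smul_eq_mul] at this
    have e : s ^ 2 * J (s ^ 2) = s * (s * J (s ^ 2)) := by ring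
    rw [e, hJdef, ← this, ← integral_const_mul]
    refine setIntegral_congr_fun measurableSet_Ioi fun r hr => ?_
    have e2 : (s⁻¹ * r) ^ 2 * s ^ 2 = 1 * r ^ 2 := by field_simp
    simp only [e2]
    field_simp
  obtain ⟨S, hS⟩ := Filter.eventually_atTop.1 (hlim.eventually (lt_mem_nhds hlimpos))
  have hJpos : ∀ t, (max S 1) ^ 2 < t → 0 < J t := by
    intro t ht
    have ht0 : 0 < t := lt_of_le_of_lt (by positivity) ht
    have hs : max S 1 < √t := by
      rw [Real.lt_sqrt (le_trans zero_le_one (le_max_right _ _))]; exact ht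
    have h1 := hS (√t) ((le_max_left _ _).trans hs.le)
    rw [hscale _ (Real.sqrt_pos.2 ht0), Real.sq_sqrt ht0.le] at h1
    exact (mul_pos_iff_of_pos_left ht0).1 h1
  have hpos : 0 < ∫ t in Set.Ioi (0:ℝ), t ^ ((1/2 : ℝ) - 1) * J t := by
    rw [setIntegral_pos_iff_support_of_nonneg_ae _ hRint]
    · have : Set.Ioi ((max S 1) ^ 2) ⊆ Function.support (fun t : ℝ => t ^ ((1/2 : ℝ) - 1) * J t) ∩ Set.Ioi 0 := by
        intro t ht
        have ht0 : 0 < t := lt_of_le_of_lt (by positivity) ht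
        refine ⟨?_, ht0⟩
        rw [Function.mem_support]
        exact (mul_pos (Real.rpow_pos_of_pos ht0 _) (hJpos t ht)).ne'
      refine lt_of_lt_of_le ?_ (measure_mono this)
      simp
    · filter_upwards [ae_restrict_mem measurableSet_Ioi] with t ht
      exact mul_nonneg (Real.rpow_nonneg (le_of_lt ht) _) (hJ t ht)
  simp only [hR] at hswap
  rw [← hswap, hL] at hpos
  exact (mul_pos_iff_of_pos_left hG).1 hpos

/-- if `d ≥ 2` and `K : ℝ^d → ℝ` is a non-zero continuous isotropic positive
definite kernel whose restriction to a line is absolutely integrable, then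
`∫₀^∞ K(x e₁) dx > 0` for a unit vector `e₁`. -/
theorem statement5 (d : ℕ) (hd : 2 ≤ d)
    (K : EuclideanSpace ℝ (Fin d) → ℝ) (hcont : Continuous K)
    (hiso : IsIsotropic K) (hpd : IsPosDefKernel K) (hne : K ≠ 0)
    (e : EuclideanSpace ℝ (Fin d)) (he : ‖e‖ = 1)
    (hint : Integrable (fun x : ℝ => K (x • e))) :
    0 < ∫ x in Set.Ioi (0:ℝ), K (x • e) := by
  have hbound : ∀ x, |K x| ≤ K 0 := by
    intro x
    have hneg : K (-x) = K x := hiso _ _ (norm_neg x)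
    have h1 := hpd 2 ![x, 0] ![1, 1]
    have h2 := hpd 2 ![x, 0] ![1, -1]
    simp [Fin.sum_univ_two, hneg] at h1 h2
    rw [abs_le]
    constructor <;> linarith
  have hK0 : 0 < K 0 := by
    by_contra! h
    apply hne
    ext x
    have := hbound x
    have h3 : |K x| ≤ 0 := this.trans h
    simpa using h3
  refine aux_main (fun x => K (x • e)) (by fun_prop) (K 0) (fun x => hbound _) (by simpa using hK0)
    hint ?_
  intro t ht
  have hv : (0:ℝ) < 1 / (4 * t) := by positivity
  have := aux_gauss (1 / (4 * t)).toNNReal (Real.toNNReal_pos.2 hv).ne'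
    (fun x => K (x • e)) (by fun_prop) (K 0) (fun x => hbound _) ?_
  · convert this using 7
    rw [Real.coe_toNNReal _ hv.le]
    field_simp
    ring
  · intro n x
    let a : Fin d := ⟨0, by omega⟩
    let b : Fin d := ⟨1, by omega⟩
    have hab : a ≠ b := by simp [a, b]
    let y : Fin n → EuclideanSpace ℝ (Fin d) := fun i =>
      (x i).1 • EuclideanSpace.single a 1 + (x i).2 • EuclideanSpace.single b 1
    have h := hpd n y (fun _ => 1)
    convert h using 5 with i _ j _
    rw [one_mul, one_mul]
    apply hiso
    rw [norm_smul, he, mul_one, Real.norm_of_nonneg (Real.sqrt_nonneg _)]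
    have e1 : y i - y j = EuclideanSpace.single a ((x i).1 - (x j).1) +
        EuclideanSpace.single b ((x i).2 - (x j).2) := by
      ext l
      simp [y, Pi.single_apply]
      split_ifs <;> ring
    rw [e1]
    have e2 := norm_add_sq_real (EuclideanSpace.single a ((x i).1 - (x j).1))
        (EuclideanSpace.single b ((x i).2 - (x j).2))
    rw [Real.sqrt_eq_iff_eq_sq (by positivity) (norm_nonneg _), e2]
    simp [EuclideanSpace.inner_single_left, hab, hab.symm]
end

section
/- Let K : ℝ → ℝ be even, continuous and positive definite, regularly varying (at infinity) with index α > 1 (so that ∫₀^∞ |K(x)| dx < ∞), and suppose ∫₀^∞ K(x) dx > 0. Then, as R → ∞, Cap_K([0,R]) ∼ R / (2 ∫₀^∞ K(x) dx). -/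
open Filter MeasureTheory

/-- A kernel `K : ℝ → ℝ` is positive definite if all quadratic forms
`∑ i j, c i * c j * K (x i - x j)` are nonnegative. -/
def IsPosDefKernel1 (K : ℝ → ℝ) : Prop :=
  ∀ (n : ℕ) (x : Fin n → ℝ) (c : Fin n → ℝ),
    0 ≤ ∑ i : Fin n, ∑ j : Fin n, c i * c j * K (x i - x j)

/-- The energy `E_K(μ) = ∫∫ K(x-y) dμ(x) dμ(y)`. -/
noncomputable def energy1 (K : ℝ → ℝ) (μ : Measure ℝ) : ℝ :=
  ∫ x, ∫ y, K (x - y) ∂μ ∂μ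

/-- The capacity of `D` with respect to `K`: the reciprocal of the minimal energy of a
Borel probability measure supported on `D`. -/
noncomputable def capacity1 (K : ℝ → ℝ) (D : Set ℝ) : ℝ :=
  (sInf {e : ℝ | ∃ μ : Measure ℝ, IsProbabilityMeasure μ ∧ μ Dᶜ = 0 ∧ e = energy1 K μ})⁻¹

noncomputable def bil (K : ℝ → ℝ) (σ τ : Measure ℝ) : ℝ := ∫ x, ∫ y, K (x - y) ∂τ ∂σ

lemma pd_finset {K : ℝ → ℝ} (hpd : IsPosDefKernel1 K) (s : Finset ℝ) (c : ℝ → ℝ) :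
    0 ≤ ∑ i ∈ s, ∑ j ∈ s, c i * c j * K (i - j) := by
  have h := hpd s.card (fun i => (s.equivFin.symm i : ℝ)) (fun i => c (s.equivFin.symm i))
  have e : ∀ f : ℝ → ℝ, ∑ i : Fin s.card, f (s.equivFin.symm i) = ∑ i ∈ s, f i := by
    intro f
    rw [← Finset.sum_coe_sort s f]
    exact Equiv.sum_comp s.equivFin.symm (fun i : s => f i)
  have h2 : ∀ i : Fin s.card, ∑ j : Fin s.card,
      c (s.equivFin.symm i) * c (s.equivFin.symm j) * K (s.equivFin.symm i - s.equivFin.symm j)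
      = ∑ j ∈ s, c (s.equivFin.symm i) * c j * K (s.equivFin.symm i - j) := fun i =>
    e (fun j => c (s.equivFin.symm i) * c j * K (s.equivFin.symm i - j))
  simp only [h2] at h
  rwa [e (fun i => ∑ j ∈ s, c i * c j * K (i - j))] at h

lemma pd_bdd {K : ℝ → ℝ} (heven : ∀ x, K (-x) = K x) (hpd : IsPosDefKernel1 K) (x : ℝ) :
    |K x| ≤ K 0 := by
  have h1 := hpd 2 ![x, 0] ![1, 1]
  have h2 := hpd 2 ![x, 0] ![1, -1]
  simp [Fin.sum_univ_two, heven] at h1 h2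
  rw [abs_le]; constructor <;> linarith

lemma simple_int (φ : SimpleFunc ℝ ℝ) (σ : Measure ℝ) [IsFiniteMeasure σ] (f : ℝ → ℝ) :
    ∫ x, f (φ x) ∂σ = ∑ s ∈ φ.range, σ.real (φ ⁻¹' {s}) * f s := by
  have h : ∀ x, f (φ x) = ∑ s ∈ φ.range, (φ ⁻¹' {s}).indicator (fun _ => f s) x := by
    intro x
    rw [Finset.sum_eq_single (φ x)]
    · simp
    · intro b _ hb
      exact Set.indicator_of_notMem (fun hx => hb (by simpa using hx.symm)) _
    · intro hx
      exact absurd (φ.mem_range_self x) hx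
  simp only [h]
  rw [integral_finsetSum]
  · refine Finset.sum_congr rfl fun s _ => ?_
    rw [integral_indicator_const _ (φ.measurableSet_fiber s), smul_eq_mul]
  · intro s _
    exact (integrable_const _).indicator (φ.measurableSet_fiber s)

lemma simple_bil {K : ℝ → ℝ} (φ : SimpleFunc ℝ ℝ) (σ τ : Measure ℝ) [IsFiniteMeasure σ]
    [IsFiniteMeasure τ] : ∫ x, ∫ y, K (φ x - φ y) ∂τ ∂σ =
      ∑ i ∈ φ.range, ∑ j ∈ φ.range, σ.real (φ ⁻¹' {i}) * τ.real (φ ⁻¹' {j}) * K (i - j) := by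
  rw [simple_int φ σ (fun z => ∫ y, K (z - φ y) ∂τ)]
  refine Finset.sum_congr rfl fun i _ => ?_
  rw [simple_int φ τ (fun z => K (i - z)), Finset.mul_sum]
  refine Finset.sum_congr rfl fun j _ => by ring

lemma simple_pd {K : ℝ → ℝ} (heven : ∀ x, K (-x) = K x) (hpd : IsPosDefKernel1 K)
    (φ : SimpleFunc ℝ ℝ) (σ τ : Measure ℝ) [IsFiniteMeasure σ] [IsFiniteMeasure τ] (t : ℝ) :
    0 ≤ (∫ x, ∫ y, K (φ x - φ y) ∂σ ∂σ) - 2 * t * (∫ x, ∫ y, K (φ x - φ y) ∂τ ∂σ)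
      + t ^ 2 * (∫ x, ∫ y, K (φ x - φ y) ∂τ ∂τ) := by
  have h := pd_finset hpd φ.range (fun s => σ.real (φ ⁻¹' {s}) - t * τ.real (φ ⁻¹' {s}))
  have hs : ∑ i ∈ φ.range, ∑ j ∈ φ.range, τ.real (φ ⁻¹' {i}) * σ.real (φ ⁻¹' {j}) * K (i - j)
     = ∑ i ∈ φ.range, ∑ j ∈ φ.range, σ.real (φ ⁻¹' {i}) * τ.real (φ ⁻¹' {j}) * K (i - j) := by
    rw [Finset.sum_comm]
    refine Finset.sum_congr rfl fun i _ => Finset.sum_congr rfl fun j _ => ?_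
    rw [← heven (i - j)]; ring_nf
  simp only [simple_bil]
  refine h.trans_eq ?_
  have : ∀ a b c d : ℝ, c = b → a - 2 * t * b + t ^ 2 * d = a - t * b - t * c + t ^ 2 * d := by
    intro a b c d h; subst h; ring
  rw [this _ _ _ _ hs]
  simp only [Finset.mul_sum, ← Finset.sum_sub_distrib, ← Finset.sum_add_distrib]
  refine Finset.sum_congr rfl fun i _ => Finset.sum_congr rfl fun j _ => by ring

lemma bil_lim {K : ℝ → ℝ} (hcont : Continuous K) (C : ℝ) (hC : ∀ x, |K x| ≤ C)
    (φ : ℕ → SimpleFunc ℝ ℝ) (hφ : ∀ x, Tendsto (fun n => φ n x) atTop (nhds x))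
    (σ τ : Measure ℝ) [IsFiniteMeasure σ] [IsFiniteMeasure τ] :
    Tendsto (fun n => ∫ x, ∫ y, K (φ n x - φ n y) ∂τ ∂σ) atTop (nhds (bil K σ τ)) := by
  unfold bil
  have hm : ∀ n, Measurable (φ n) := fun n => (φ n).measurable
  refine tendsto_integral_of_dominated_convergence (fun _ => C * τ.real Set.univ) ?_ ?_ ?_ ?_
  · intro n
    have : StronglyMeasurable (Function.uncurry fun x y => K (φ n x - φ n y)) := by
      apply Measurable.stronglyMeasurable
      have := hm n
      have := hcont.measurable
      unfold Function.uncurry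
      fun_prop
    exact this.integral_prod_right.aestronglyMeasurable
  · exact integrable_const _
  · intro n
    refine Eventually.of_forall fun x => ?_
    exact norm_integral_le_of_norm_le_const (Eventually.of_forall fun y => hC _)
  · refine Eventually.of_forall fun x => ?_
    refine tendsto_integral_of_dominated_convergence (fun _ => C) ?_ ?_ ?_ ?_
    · intro n
      have := hm n
      have := hcont.measurable
      apply Measurable.aestronglyMeasurable
      fun_prop
    · exact integrable_const _
    · intro n
      exact Eventually.of_forall fun y => hC _
    · exact Eventually.of_forall fun y => (hcont.tendsto _).comp ((hφ x).sub (hφ y))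

lemma bil_pd {K : ℝ → ℝ} (heven : ∀ x, K (-x) = K x) (hcont : Continuous K)
    (hpd : IsPosDefKernel1 K)
    (σ τ : Measure ℝ) [IsFiniteMeasure σ] [IsFiniteMeasure τ] (t : ℝ) :
    0 ≤ bil K σ σ - 2 * t * bil K σ τ + t ^ 2 * bil K τ τ := by
  let φ : ℕ → SimpleFunc ℝ ℝ := fun n =>
    SimpleFunc.approxOn id measurable_id Set.univ 0 (Set.mem_univ _) n
  have hφ : ∀ x, Tendsto (fun n => φ n x) atTop (nhds x) := by
    intro x
    exact SimpleFunc.tendsto_approxOn measurable_id (Set.mem_univ _) (by simp)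
  have H := bil_lim hcont (K 0) (pd_bdd heven hpd) φ hφ
  have := ((H σ σ).sub ((H σ τ).const_mul (2 * t))).add ((H τ τ).const_mul (t ^ 2))
  exact ge_of_tendsto' this fun n => simple_pd heven hpd (φ n) σ τ t

noncomputable def prim (K : ℝ → ℝ) (t : ℝ) : ℝ := ∫ u in (0:ℝ)..t, K u

lemma prim_cont {K : ℝ → ℝ} (hcont : Continuous K) : Continuous (prim K) :=
  intervalIntegral.continuous_primitive (fun a b => hcont.intervalIntegrable a b) 0

lemma prim_neg {K : ℝ → ℝ} (heven : ∀ x, K (-x) = K x) (t : ℝ) : prim K (-t) = - prim K t := by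
  unfold prim
  have := intervalIntegral.integral_comp_neg (a := 0) (b := t) (f := K)
  simp only [heven, neg_zero] at this
  rw [this, intervalIntegral.integral_symm]

lemma pot {K : ℝ → ℝ} (heven : ∀ x, K (-x) = K x) (hcont : Continuous K) {a b : ℝ} (hab : a ≤ b)
    (x : ℝ) : ∫ y in Set.Icc a b, K (x - y) = prim K (x - a) + prim K (b - x) := by
  rw [integral_Icc_eq_integral_Ioc, ← intervalIntegral.integral_of_le hab,
    intervalIntegral.integral_comp_sub_left (f := K)]
  have : prim K (b - x) = - prim K (x - b) := by rw [← prim_neg heven]; ring_nf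
  rw [this]
  unfold prim
  rw [← sub_eq_add_neg, intervalIntegral.integral_interval_sub_left] <;>
    exact hcont.intervalIntegrable _ _

lemma bil_leb {K : ℝ → ℝ} (heven : ∀ x, K (-x) = K x) (hcont : Continuous K) {a b : ℝ}
    (hab : a ≤ b) : bil K (volume.restrict (Set.Icc a b)) (volume.restrict (Set.Icc a b))
      = 2 * ∫ t in (0:ℝ)..(b - a), prim K t := by
  unfold bil
  simp only [pot heven hcont hab]
  rw [integral_Icc_eq_integral_Ioc, ← intervalIntegral.integral_of_le hab]
  have hp := prim_cont hcont
  rw [intervalIntegral.integral_add, intervalIntegral.integral_comp_sub_right (f := prim K),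
    intervalIntegral.integral_comp_sub_left (f := prim K)]
  · simp; ring
  · exact Continuous.intervalIntegrable (by fun_prop) _ _
  · exact Continuous.intervalIntegrable (by fun_prop) _ _

lemma avg_lim {F : ℝ → ℝ} (hF : Continuous F) {I : ℝ} (h : Tendsto F atTop (nhds I)) :
    Tendsto (fun N => N⁻¹ * ∫ t in (0:ℝ)..N, F t) atTop (nhds I) := by
  obtain ⟨C, hC⟩ : ∃ C, ∀ t, 0 ≤ t → |F t| ≤ C := by
    obtain ⟨A, hA⟩ := eventually_atTop.1 (h.abs.eventually (gt_mem_nhds (lt_add_one |I|)))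
    obtain ⟨B, hB⟩ := (isCompact_Icc (a := (0:ℝ)) (b := A)).exists_bound_of_continuousOn
      hF.continuousOn
    refine ⟨max (|I| + 1) B, fun t ht => ?_⟩
    rcases le_total A t with hh | hh
    · exact (hA t hh).le.trans (le_max_left _ _)
    · exact (hB t ⟨ht, hh⟩).trans (le_max_right _ _)
  have key : Tendsto (fun N : ℝ => ∫ s in (0:ℝ)..1, F (N * s)) atTop
      (nhds (∫ s in (0:ℝ)..1, I)) := by
    refine intervalIntegral.tendsto_integral_filter_of_dominated_convergence (fun _ => C) ?_ ?_ ?_ ?_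
    · exact Eventually.of_forall fun N => Continuous.aestronglyMeasurable (by fun_prop)
    · filter_upwards [eventually_ge_atTop 0] with N hN
      refine Eventually.of_forall fun s hs => ?_
      rw [Set.uIoc_of_le zero_le_one] at hs
      exact hC _ (mul_nonneg hN hs.1.le)
    · simp
    · refine Eventually.of_forall fun s hs => ?_
      rw [Set.uIoc_of_le zero_le_one] at hs
      exact h.comp (tendsto_id.atTop_mul_const hs.1)
  simp only [intervalIntegral.integral_const, sub_zero, one_smul] at key
  refine key.congr' ?_
  filter_upwards [eventually_gt_atTop 0] with N hN
  rw [intervalIntegral.integral_comp_mul_left _ hN.ne']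
  simp

/-- if `K : ℝ → ℝ` is even, continuous, positive definite, regularly varying
with index `α > 1`, and `∫₀^∞ K(x) dx > 0`, then `Cap_K([0,R]) ∼ R / (2 ∫₀^∞ K(x) dx)` as
`R → ∞`. -/
theorem statement7 (K : ℝ → ℝ) (heven : ∀ x, K (-x) = K x)
    (hcont : Continuous K) (hpd : IsPosDefKernel1 K)
    (α : ℝ) (hα : 1 < α) (hrv : RegularlyVarying K α)
    (hpos : 0 < ∫ x in Set.Ioi (0:ℝ), K x) :
    Tendsto (fun R =>
        capacity1 K (Set.Icc 0 R) / (R / (2 * ∫ x in Set.Ioi (0:ℝ), K x)))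
      atTop (nhds 1) := by
  have hint : IntegrableOn K (Set.Ioi 0) := by
    by_contra h
    rw [integral_undef h] at hpos
    exact lt_irrefl _ hpos
  set I := ∫ x in Set.Ioi (0:ℝ), K x with hI
  have hF : Tendsto (prim K) atTop (nhds I) :=
    intervalIntegral_tendsto_integral_Ioi 0 hint tendsto_id
  have hG := avg_lim (prim_cont hcont) hF
  set G := fun N : ℝ => N⁻¹ * ∫ t in (0:ℝ)..N, prim K t with hGdef
  set S : ℝ → Set ℝ := fun R => {e : ℝ | ∃ μ : Measure ℝ, IsProbabilityMeasure μ ∧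
    μ (Set.Icc 0 R)ᶜ = 0 ∧ e = energy1 K μ} with hS
  have hcap : ∀ R, capacity1 K (Set.Icc 0 R) = (sInf (S R))⁻¹ := fun R => rfl
  have hbdd : ∀ R, BddBelow (S R) := by
    intro R
    refine ⟨0, ?_⟩
    rintro e ⟨μ, hμ, -, rfl⟩
    have := bil_pd heven hcont hpd μ μ 0
    simpa [bil, energy1] using this
  have hmem : ∀ R, 0 < R → R⁻¹ * (2 * G R) ∈ S R := by
    intro R hR
    refine ⟨(ENNReal.ofReal R)⁻¹ • volume.restrict (Set.Icc 0 R), ⟨?_⟩, ?_, ?_⟩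
    · simp
      exact ENNReal.inv_mul_cancel (by simpa using hR) (by simp)
    · simp
    · have h := bil_leb heven hcont hR.le
      unfold bil at h
      unfold energy1
      simp only [integral_smul_measure, integral_const_mul, smul_eq_mul, h]
      rw [ENNReal.toReal_inv, ENNReal.toReal_ofReal hR.le, sub_zero]
      ring
  -- lower bound
  have hlow : ∀ ε M R : ℝ, 0 < ε → 0 ≤ M → 0 < R → (∀ t, M ≤ t → I - ε ≤ prim K t) →
      (R + 2 * M)⁻¹ * (4 * (I - ε) - 2 * G (R + 2 * M)) ≤ sInf (S R) := by
    intro ε M R hε hM hR ht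
    refine le_csInf ⟨_, hmem R hR⟩ ?_
    rintro e ⟨μ, hμ, hsupp, rfl⟩
    have hab : -M ≤ R + M := by linarith
    have hN : 0 < R + 2 * M := by linarith
    have h1 := bil_pd heven hcont hpd μ (volume.restrict (Set.Icc (-M) (R + M))) (R + 2 * M)⁻¹
    rw [bil_leb heven hcont hab] at h1
    have h2 : 2 * (I - ε) ≤ bil K μ (volume.restrict (Set.Icc (-M) (R + M))) := by
      unfold bil
      simp only [pot heven hcont hab]
      have hp := prim_cont hcont
      have hae : ∀ᵐ x ∂μ, x ∈ Set.Icc 0 R := by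
        rw [ae_iff]; exact hsupp
      have hμr : μ.restrict (Set.Icc 0 R) = μ := Measure.restrict_eq_self_of_ae_mem hae
      have hi : Integrable (fun x => prim K (x - -M) + prim K (R + M - x)) μ := by
        rw [← hμr]
        exact (Continuous.continuousOn (by fun_prop)).integrableOn_compact isCompact_Icc
      have : ∫ x, 2 * (I - ε) ∂μ ≤ ∫ x, (prim K (x - -M) + prim K (R + M - x)) ∂μ := by
        refine integral_mono_ae (integrable_const _) hi ?_
        filter_upwards [hae] with x hx
        have a1 := ht (x - -M) (by linarith [hx.1])
        have a2 := ht (R + M - x) (by linarith [hx.2])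
        linarith
      simpa using this
    have h3 : ∫ t in (0:ℝ)..(R + M - -M), prim K t = (R + 2 * M) * G (R + 2 * M) := by
      simp only [hGdef]
      rw [mul_inv_cancel_left₀ hN.ne']
      congr 1; ring
    rw [h3] at h1
    change _ ≤ bil K μ μ
    have hNi := inv_pos.2 hN
    have h4 := mul_le_mul_of_nonneg_left h2 hNi.le
    have h5 : ((R + 2 * M)⁻¹) ^ 2 * (2 * ((R + 2 * M) * G (R + 2 * M)))
      = (R + 2 * M)⁻¹ * (2 * G (R + 2 * M)) := by field_simp
    rw [h5] at h1
    linarith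
  have hlim : Tendsto (fun R => R * sInf (S R)) atTop (nhds (2 * I)) := by
    rw [tendsto_order]
    constructor
    · intro a ha
      set ε := (2 * I - a) / 8 with hε
      have hε0 : 0 < ε := by rw [hε]; linarith
      obtain ⟨M0, hM0⟩ := eventually_atTop.1 (hF.eventually (lt_mem_nhds (show I - ε < I by linarith)))
      set M := max M0 0
      have hM : ∀ t, M ≤ t → I - ε ≤ prim K t :=
        fun t ht => (hM0 t ((le_max_left _ _).trans ht)).le
      have hMn : 0 ≤ M := le_max_right _ _
      have hadd : Tendsto (fun R : ℝ => R + 2 * M) atTop atTop :=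
        tendsto_atTop_add_const_right _ _ tendsto_id
      have hq : Tendsto (fun R : ℝ => R * (R + 2 * M)⁻¹) atTop (nhds 1) := by
        have : Tendsto (fun R : ℝ => 1 - 2 * M * (R + 2 * M)⁻¹) atTop (nhds (1 - 2 * M * 0)) :=
          ((tendsto_inv_atTop_zero.comp hadd).const_mul _).const_sub _
        simp only [mul_zero, sub_zero] at this
        refine this.congr' ?_
        filter_upwards [eventually_gt_atTop 0] with R hR
        have : R + 2 * M ≠ 0 := by positivity
        field_simp
        ring
      have hl := hq.mul (((hG.comp hadd).const_mul 2).const_sub (4 * (I - ε)))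
      have hl2 := hl.eventually (lt_mem_nhds (show a < 1 * (4 * (I - ε) - 2 * I) by linarith))
      filter_upwards [hl2, eventually_gt_atTop 0] with R h1 h2
      refine h1.trans_le ?_
      have := mul_le_mul_of_nonneg_left (hlow ε M R hε0 hMn h2 hM) h2.le
      rw [← mul_assoc] at this
      exact this
    · intro a ha
      filter_upwards [(hG.const_mul 2).eventually (gt_mem_nhds ha), eventually_gt_atTop 0]
        with R h1 h2
      refine lt_of_le_of_lt ?_ h1
      have := mul_le_mul_of_nonneg_left (csInf_le (hbdd R) (hmem R h2)) h2.le
      rwa [mul_inv_cancel_left₀ h2.ne'] at this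
  have h2I : 2 * I ≠ 0 := by positivity
  have := (hlim.inv₀ h2I).mul_const (2 * I)
  rw [inv_mul_cancel₀ h2I] at this
  refine this.congr fun R => ?_
  rw [hcap]
  simp only [div_eq_mul_inv, mul_inv, inv_inv]
  ring
end
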